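/- arXiv:0705.0741 — 3 statements merged into one kernel-verified Lean document; each statement's English description precedes it below -/
import Mathlib

section
/- Let f ∈ ℂ[x,y,z] be a homogeneous polynomial of degree d > 1 having an isolated singularity at the origin, i.e. the only common zero of f_x, f_y, f_z in ℂ³ is (0,0,0). Then the Brieskorn module B(f) = ℂ[x,y,z]/E_f, regarded as a module over ℂ[t] with t acting by multiplication by f, is a free ℂ[t]-module of rank μ(f) = dim_ℂ(ℂ[x,y,z]/J_f) (the Milnor number of f at the origin). -/
open MvPolynomial

/-- The linear map `(P,Q,R) ↦ f_x(R_y − Q_z) + f_y(P_z − R_x) + f_z(Q_x − P_y)`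
whose range is `E_f`. -/
noncomputable def Emap (f : MvPolynomial (Fin 3) ℂ) :
    (MvPolynomial (Fin 3) ℂ × MvPolynomial (Fin 3) ℂ × MvPolynomial (Fin 3) ℂ) →ₗ[ℂ]
      MvPolynomial (Fin 3) ℂ where
  toFun P := pderiv 0 f * (pderiv 1 P.2.2 - pderiv 2 P.2.1) +
             pderiv 1 f * (pderiv 2 P.1 - pderiv 0 P.2.2) +
             pderiv 2 f * (pderiv 0 P.2.1 - pderiv 1 P.1)
  map_add' P Q := by simp only [Prod.fst_add, Prod.snd_add, map_add]; ring
  map_smul' c P := by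
    simp only [Prod.smul_fst, Prod.smul_snd, Derivation.map_smul, RingHom.id_apply,
      ← smul_sub, mul_smul_comm, ← smul_add]

/-- `E_f` as a `ℂ`-subspace of `ℂ[x,y,z]`. -/
noncomputable def Esub (f : MvPolynomial (Fin 3) ℂ) :
    Submodule ℂ (MvPolynomial (Fin 3) ℂ) :=
  LinearMap.range (Emap f)

lemma mulLeft_le_comap_Esub (f : MvPolynomial (Fin 3) ℂ) :
    Esub f ≤ (Esub f).comap (LinearMap.mulLeft ℂ f) := by
  rintro w ⟨⟨P, Q, R⟩, rfl⟩
  refine ⟨⟨f * P, f * Q, f * R⟩, ?_⟩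
  simp only [Emap, LinearMap.coe_mk, AddHom.coe_mk, Submodule.mem_comap,
    LinearMap.mulLeft_apply, pderiv_mul]
  ring

/-- Multiplication by `f` on the Brieskorn module `B(f) = ℂ[x,y,z]/E_f`
(the action of `t`). -/
noncomputable def Bmul (f : MvPolynomial (Fin 3) ℂ) :
    (MvPolynomial (Fin 3) ℂ ⧸ Esub f) →ₗ[ℂ] (MvPolynomial (Fin 3) ℂ ⧸ Esub f) :=
  Submodule.mapQ (Esub f) (Esub f) (LinearMap.mulLeft ℂ f) (mulLeft_le_comap_Esub f)


lemma bk_pderiv_comm (i j : Fin 3) (p : (MvPolynomial (Fin 3) ℂ)) :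
    pderiv i (pderiv j p) = pderiv j (pderiv i p) := by
  by_cases h : i = j
  · subst h; rfl
  · ext m
    simp only [coeff_pderiv, Finsupp.add_apply, Finsupp.single_apply, if_neg h, if_neg (Ne.symm h),
      add_zero]
    rw [add_right_comm]
    ring

lemma bk_comp_pderiv (i : Fin 3) (n : ℕ) (p : (MvPolynomial (Fin 3) ℂ)) :
    homogeneousComponent n (pderiv i p) = pderiv i (homogeneousComponent (n + 1) p) := by
  ext m
  simp only [coeff_pderiv, coeff_homogeneousComponent, map_add, Finsupp.degree_single,
    add_left_inj]
  split_ifs <;> simp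

lemma bk_comp_mul (k e : ℕ) (a p : (MvPolynomial (Fin 3) ℂ)) (ha : a.IsHomogeneous k) :
    homogeneousComponent (k + e) (a * p) = a * homogeneousComponent e p := by
  conv_lhs => rw [← sum_homogeneousComponent p]
  rw [Finset.mul_sum, map_sum]
  have : ∀ i, homogeneousComponent (k + e) (a * homogeneousComponent i p) =
      if i = e then a * homogeneousComponent e p else 0 := by
    intro i
    have h := ha.mul (homogeneousComponent_isHomogeneous i p)
    rw [homogeneousComponent_of_mem h]
    by_cases hi : i = e
    · subst hi; simp
    · rw [if_neg hi, if_neg (by omega)]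
  simp only [this]
  rw [Finset.sum_ite_eq']
  split_ifs with h
  · rfl
  · rw [homogeneousComponent_eq_zero _ _ (by simpa using h)]
    simp

lemma bk_comp_mul_lt (k n : ℕ) (a p : (MvPolynomial (Fin 3) ℂ)) (ha : a.IsHomogeneous k) (hn : n < k) :
    homogeneousComponent n (a * p) = 0 := by
  conv_lhs => rw [← sum_homogeneousComponent p]
  rw [Finset.mul_sum, map_sum]
  refine Finset.sum_eq_zero fun i _ => ?_
  have h := ha.mul (homogeneousComponent_isHomogeneous i p)
  rw [homogeneousComponent_of_mem h, if_neg (by omega)]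

lemma bk_euler (n : ℕ) (p : (MvPolynomial (Fin 3) ℂ)) (hp : p.IsHomogeneous n) :
    X 0 * pderiv 0 p + X 1 * pderiv 1 p + X 2 * pderiv 2 p = (n : (MvPolynomial (Fin 3) ℂ)) * p := by
  have := hp.sum_X_mul_pderiv
  rw [Fin.sum_univ_three] at this
  rw [this, nsmul_eq_mul]

/-- `(X 0)^N, (X 1)^N` coprime. -/
lemma bk_reg2 (N : ℕ) (u v : (MvPolynomial (Fin 3) ℂ)) (h : (X 1) ^ N * u = (X 0) ^ N * v) :
    ∃ w, u = (X 0) ^ N * w := by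
  have h0 : Prime (X 0 : (MvPolynomial (Fin 3) ℂ)) := X_prime
  have : (X 0 : (MvPolynomial (Fin 3) ℂ)) ^ N ∣ (X 1) ^ N * u := ⟨v, h⟩
  refine h0.pow_dvd_of_dvd_mul_left N ?_ this
  intro h'
  have := h0.dvd_of_dvd_pow h'
  rw [X_dvd_X] at this
  simp at this

lemma bk_reg3 (N : ℕ) (u : (MvPolynomial (Fin 3) ℂ))
    (h : (X 2) ^ N * u ∈ Ideal.span ({(X 0) ^ N, (X 1) ^ N} : Set (MvPolynomial (Fin 3) ℂ))) :
    u ∈ Ideal.span ({(X 0) ^ N, (X 1) ^ N} : Set (MvPolynomial (Fin 3) ℂ)) := by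
  have e : ({(X 0) ^ N, (X 1) ^ N} : Set (MvPolynomial (Fin 3) ℂ)) = (fun s => monomial s (1 : ℂ)) ''
      ({Finsupp.single 0 N, Finsupp.single 1 N} : Set (Fin 3 →₀ ℕ)) := by
    rw [Set.image_pair]
    simp [X_pow_eq_monomial]
  rw [e, mem_ideal_span_monomial_image] at h ⊢
  intro m hm
  obtain ⟨s, hs, hle⟩ := h (Finsupp.single 2 N + m) (by
    rw [mem_support_iff] at hm ⊢
    rwa [X_pow_eq_monomial, coeff_monomial_mul, one_mul])
  refine ⟨s, hs, ?_⟩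
  rcases hs with rfl | rfl
  · rw [Finsupp.single_le_iff] at hle ⊢
    simpa using hle
  · rw [Finsupp.single_le_iff] at hle ⊢
    simpa using hle

lemma bk_mem_span3 (a b c w : (MvPolynomial (Fin 3) ℂ)) (h : w ∈ Ideal.span ({a, b, c} : Set (MvPolynomial (Fin 3) ℂ))) :
    ∃ p q r, w = a * p + b * q + c * r := by
  obtain ⟨p, q, r, h⟩ := Submodule.mem_span_triple.1 h
  exact ⟨p, q, r, by rw [← h]; simp only [smul_eq_mul]; ring⟩

lemma bk_nullst (a b c : (MvPolynomial (Fin 3) ℂ))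
    (hiso : ∀ p : Fin 3 → ℂ, eval p a = 0 → eval p b = 0 → eval p c = 0 → p = 0) :
    ∃ N : ℕ, ∀ i, (X i : (MvPolynomial (Fin 3) ℂ)) ^ N ∈ Ideal.span ({a, b, c} : Set (MvPolynomial (Fin 3) ℂ)) := by
  have h : ∀ i, (X i : (MvPolynomial (Fin 3) ℂ)) ∈ (Ideal.span ({a, b, c} : Set (MvPolynomial (Fin 3) ℂ))).radical := by
    intro i
    rw [← vanishingIdeal_zeroLocus_eq_radical (K := ℂ), mem_vanishingIdeal_iff]
    intro x hx
    rw [mem_zeroLocus_iff] at hx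
    have := hiso x (by simpa [aeval_eq_eval] using hx a (Ideal.subset_span (by simp)))
      (by simpa [aeval_eq_eval] using hx b (Ideal.subset_span (by simp)))
      (by simpa [aeval_eq_eval] using hx c (Ideal.subset_span (by simp)))
    simp [this]
  choose n hn using h
  refine ⟨∑ i, n i, fun i => ?_⟩
  exact Ideal.pow_mem_of_pow_mem _ (hn i)
    (Finset.single_le_sum (f := n) (fun _ _ => Nat.zero_le _) (Finset.mem_univ i))

/-- Exactness of the Koszul complex in the middle. -/
lemma bk_koszul (a b c : (MvPolynomial (Fin 3) ℂ))
    (hiso : ∀ p : Fin 3 → ℂ, eval p a = 0 → eval p b = 0 → eval p c = 0 → p = 0)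
    (u v w : (MvPolynomial (Fin 3) ℂ)) (h : a * u + b * v + c * w = 0) :
    ∃ p q r, u = b * r - c * q ∧ v = c * p - a * r ∧ w = a * q - b * p := by
  obtain ⟨N, hN⟩ := bk_nullst a b c hiso
  obtain ⟨α0, α1, α2, hα⟩ := bk_mem_span3 _ _ _ _ (hN 0)
  obtain ⟨β0, β1, β2, hβ⟩ := bk_mem_span3 _ _ _ _ (hN 1)
  obtain ⟨γ0, γ1, γ2, hγ⟩ := bk_mem_span3 _ _ _ _ (hN 2)
  -- U = V × α
  obtain ⟨U0, hU0⟩ : ∃ U0, U0 = v * α2 - w * α1 := ⟨_, rfl⟩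
  obtain ⟨U1, hU1⟩ : ∃ U1, U1 = w * α0 - u * α2 := ⟨_, rfl⟩
  obtain ⟨U2, hU2⟩ : ∃ U2, U2 = u * α1 - v * α0 := ⟨_, rfl⟩
  have e0 : (X 0 : (MvPolynomial (Fin 3) ℂ)) ^ N * u = b * U2 - c * U1 := by
    rw [hα, hU1, hU2]; linear_combination α0 * h
  have e1 : (X 0 : (MvPolynomial (Fin 3) ℂ)) ^ N * v = c * U0 - a * U2 := by
    rw [hα, hU0, hU2]; linear_combination α1 * h
  have e2 : (X 0 : (MvPolynomial (Fin 3) ℂ)) ^ N * w = a * U1 - b * U0 := by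
    rw [hα, hU0, hU1]; linear_combination α2 * h
  clear hU0 hU1 hU2 hα
  obtain ⟨g, hg⟩ : ∃ g, g = β0 * U0 + β1 * U1 + β2 * U2 := ⟨_, rfl⟩
  have k0 : (X 1 : (MvPolynomial (Fin 3) ℂ)) ^ N * U0 = a * g - X 0 ^ N * (β1 * w - β2 * v) := by
    rw [hβ, hg]; linear_combination β1 * e2 - β2 * e1
  have k1 : (X 1 : (MvPolynomial (Fin 3) ℂ)) ^ N * U1 = b * g - X 0 ^ N * (β2 * u - β0 * w) := by
    rw [hβ, hg]; linear_combination β2 * e0 - β0 * e2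
  have k2 : (X 1 : (MvPolynomial (Fin 3) ℂ)) ^ N * U2 = c * g - X 0 ^ N * (β0 * v - β1 * u) := by
    rw [hβ, hg]; linear_combination β0 * e1 - β1 * e0
  have hgm : g ∈ Ideal.span ({(X 0) ^ N, (X 1) ^ N} : Set (MvPolynomial (Fin 3) ℂ)) := by
    apply bk_reg3
    rw [Ideal.mem_span_pair]
    refine ⟨γ0 * (β1 * w - β2 * v) + γ1 * (β2 * u - β0 * w) + γ2 * (β0 * v - β1 * u),
      γ0 * U0 + γ1 * U1 + γ2 * U2, ?_⟩
    rw [hγ]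
    linear_combination γ0 * k0 + γ1 * k1 + γ2 * k2
  obtain ⟨p, q, hpq⟩ := Ideal.mem_span_pair.1 hgm
  obtain ⟨W0, hW0⟩ := bk_reg2 N (U0 - a * q) (a * p - (β1 * w - β2 * v)) (by
    linear_combination k0 - a * hpq)
  obtain ⟨W1, hW1⟩ := bk_reg2 N (U1 - b * q) (b * p - (β2 * u - β0 * w)) (by
    linear_combination k1 - b * hpq)
  obtain ⟨W2, hW2⟩ := bk_reg2 N (U2 - c * q) (c * p - (β0 * v - β1 * u)) (by
    linear_combination k2 - c * hpq)
  have hX : (X 0 : (MvPolynomial (Fin 3) ℂ)) ^ N ≠ 0 := pow_ne_zero _ (X_ne_zero _)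
  refine ⟨W0, W1, W2, mul_left_cancel₀ hX ?_, mul_left_cancel₀ hX ?_, mul_left_cancel₀ hX ?_⟩
  · linear_combination e0 + b * hW2 - c * hW1
  · linear_combination e1 + c * hW0 - a * hW2
  · linear_combination e2 + a * hW1 - b * hW0

lemma bk_comp_mem (f : (MvPolynomial (Fin 3) ℂ)) (d : ℕ) (hf : f.IsHomogeneous d) (n : ℕ) (w : (MvPolynomial (Fin 3) ℂ))
    (hw : w ∈ Esub f) : homogeneousComponent n w ∈ Esub f := by
  obtain ⟨⟨P, Q, R⟩, rfl⟩ := hw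
  by_cases hn : n < d - 1
  · simp only [Emap, LinearMap.coe_mk, AddHom.coe_mk, map_add,
      bk_comp_mul_lt (d - 1) n _ _ hf.pderiv hn]
    simp
  · obtain ⟨e, rfl⟩ := Nat.exists_eq_add_of_le (not_lt.1 hn)
    refine ⟨(homogeneousComponent (e + 1) P, homogeneousComponent (e + 1) Q,
      homogeneousComponent (e + 1) R), ?_⟩
    simp only [Emap, LinearMap.coe_mk, AddHom.coe_mk, map_add, map_sub,
      bk_comp_mul (d - 1) e _ _ hf.pderiv, bk_comp_pderiv]

lemma bk_smul_mem (f : (MvPolynomial (Fin 3) ℂ)) (k : ℕ) (hk : k ≠ 0) (w : (MvPolynomial (Fin 3) ℂ)) (h : (k : (MvPolynomial (Fin 3) ℂ)) * w ∈ Esub f) :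
    w ∈ Esub f := by
  have h2 := (Esub f).smul_mem ((k : ℂ)⁻¹) h
  have e : ((k : ℂ)⁻¹) • ((k : (MvPolynomial (Fin 3) ℂ)) * w) = w := by
    rw [← nsmul_eq_mul, ← Nat.cast_smul_eq_nsmul ℂ, smul_smul,
      inv_mul_cancel₀ (Nat.cast_ne_zero.2 hk), one_smul]
  rwa [e] at h2

lemma bk_mem_of_comp (N : Submodule ℂ (MvPolynomial (Fin 3) ℂ)) (g : (MvPolynomial (Fin 3) ℂ))
    (h : ∀ n, homogeneousComponent n g ∈ N) : g ∈ N := by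
  rw [← sum_homogeneousComponent g]
  exact N.sum_mem fun i _ => h i

/-- Multiplication by `f` is injective on the Brieskorn module. -/
lemma bk_inj (f : (MvPolynomial (Fin 3) ℂ)) (d : ℕ) (hd : 1 < d) (hf : f.IsHomogeneous d)
    (hiso : ∀ p : Fin 3 → ℂ,
      eval p (pderiv 0 f) = 0 → eval p (pderiv 1 f) = 0 → eval p (pderiv 2 f) = 0 →
        p = 0) (g : (MvPolynomial (Fin 3) ℂ)) (hg : f * g ∈ Esub f) : g ∈ Esub f := by
  refine bk_mem_of_comp _ _ fun m => ?_
  have h1 := bk_comp_mem f d hf (d + m) _ hg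
  rw [bk_comp_mul d m _ _ hf] at h1
  have hm := homogeneousComponent_isHomogeneous m g
  generalize homogeneousComponent m g = g at h1 hm
  have hEf := bk_euler d f hf
  have hEg := bk_euler m g hm
  obtain ⟨⟨P, Q, R⟩, hW⟩ := h1
  simp only [Emap, LinearMap.coe_mk, AddHom.coe_mk] at hW
  obtain ⟨p, q, r, h0, h1, h2⟩ := bk_koszul _ _ _ hiso
    (X 0 * g - (d : (MvPolynomial (Fin 3) ℂ)) * (pderiv 1 R - pderiv 2 Q))
    (X 1 * g - (d : (MvPolynomial (Fin 3) ℂ)) * (pderiv 2 P - pderiv 0 R))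
    (X 2 * g - (d : (MvPolynomial (Fin 3) ℂ)) * (pderiv 0 Q - pderiv 1 P))
    (by linear_combination g * hEf - d * hW)
  have k0 := congrArg (pderiv 0) h0
  have k1 := congrArg (pderiv 1) h1
  have k2 := congrArg (pderiv 2) h2
  have z : ∀ i : Fin 3, pderiv i (d : (MvPolynomial (Fin 3) ℂ)) = 0 := fun i => by
    rw [← map_natCast (C : ℂ →+* (MvPolynomial (Fin 3) ℂ)), pderiv_C]
  simp only [map_sub, pderiv_mul, z, pderiv_X_self, zero_mul, one_mul, zero_add] at k0 k1 k2
  apply bk_smul_mem f (m + 3) (by omega)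
  refine ⟨(-p, -q, -r), ?_⟩
  simp only [Emap, LinearMap.coe_mk, AddHom.coe_mk, map_neg]
  push_cast
  rw [bk_pderiv_comm 1 0 f, bk_pderiv_comm 1 0 R] at k1
  rw [bk_pderiv_comm 2 0 f, bk_pderiv_comm 2 1 f, bk_pderiv_comm 2 0 Q,
    bk_pderiv_comm 2 1 P] at k2
  linear_combination hEg - k0 - k1 - k2

/-- Elements of the Jacobian ideal reduce to multiples of `f` modulo `E_f`. -/
lemma bk_reduce (f : (MvPolynomial (Fin 3) ℂ)) (d : ℕ) (hf : f.IsHomogeneous d) (e : ℕ) (u v w : (MvPolynomial (Fin 3) ℂ))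
    (hu : u.IsHomogeneous e) (hv : v.IsHomogeneous e) (hw : w.IsHomogeneous e) :
    ((e + 2 : ℕ) : (MvPolynomial (Fin 3) ℂ)) * (pderiv 0 f * u + pderiv 1 f * v + pderiv 2 f * w) -
      d * (f * (pderiv 0 u + pderiv 1 v + pderiv 2 w)) ∈ Esub f := by
  have hEf := bk_euler d f hf
  have h0 := bk_euler e u hu
  have h1 := bk_euler e v hv
  have h2 := bk_euler e w hw
  refine ⟨(v * X 2 - w * X 1, w * X 0 - u * X 2, u * X 1 - v * X 0), ?_⟩
  have n01 : pderiv (0 : Fin 3) (X 1 : (MvPolynomial (Fin 3) ℂ)) = 0 := pderiv_X_of_ne (by decide)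
  have n02 : pderiv (0 : Fin 3) (X 2 : (MvPolynomial (Fin 3) ℂ)) = 0 := pderiv_X_of_ne (by decide)
  have n10 : pderiv (1 : Fin 3) (X 0 : (MvPolynomial (Fin 3) ℂ)) = 0 := pderiv_X_of_ne (by decide)
  have n12 : pderiv (1 : Fin 3) (X 2 : (MvPolynomial (Fin 3) ℂ)) = 0 := pderiv_X_of_ne (by decide)
  have n20 : pderiv (2 : Fin 3) (X 0 : (MvPolynomial (Fin 3) ℂ)) = 0 := pderiv_X_of_ne (by decide)
  have n21 : pderiv (2 : Fin 3) (X 1 : (MvPolynomial (Fin 3) ℂ)) = 0 := pderiv_X_of_ne (by decide)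
  simp only [Emap, LinearMap.coe_mk, AddHom.coe_mk, map_sub, pderiv_mul, pderiv_X_self,
    n01, n02, n10, n12, n20, n21]
  push_cast
  linear_combination pderiv 0 f * h0 + pderiv 1 f * h1 + pderiv 2 f * h2 -
    (pderiv 0 u + pderiv 1 v + pderiv 2 w) * hEf

lemma bk_Esub_le (f w : (MvPolynomial (Fin 3) ℂ)) (h : w ∈ Esub f) :
    w ∈ Ideal.span ({pderiv 0 f, pderiv 1 f, pderiv 2 f} : Set (MvPolynomial (Fin 3) ℂ)) := by
  obtain ⟨⟨P, Q, R⟩, rfl⟩ := h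
  simp only [Emap, LinearMap.coe_mk, AddHom.coe_mk]
  refine Ideal.add_mem _ (Ideal.add_mem _ ?_ ?_) ?_ <;>
    exact Ideal.mul_mem_right _ _ (Ideal.subset_span (by simp))

lemma bk_f_mem (f : (MvPolynomial (Fin 3) ℂ)) (d : ℕ) (hd : 1 < d) (hf : f.IsHomogeneous d) :
    f ∈ Ideal.span ({pderiv 0 f, pderiv 1 f, pderiv 2 f} : Set (MvPolynomial (Fin 3) ℂ)) := by
  have h := bk_euler d f hf
  have h2 : (d : (MvPolynomial (Fin 3) ℂ)) * f ∈ Ideal.span ({pderiv 0 f, pderiv 1 f, pderiv 2 f} : Set (MvPolynomial (Fin 3) ℂ)) := by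
    rw [← h]
    refine Ideal.add_mem _ (Ideal.add_mem _ ?_ ?_) ?_ <;>
      exact Ideal.mul_mem_left _ _ (Ideal.subset_span (by simp))
  have h3 := Ideal.mul_mem_left _ (C ((d : ℂ)⁻¹)) h2
  rwa [← mul_assoc, ← map_natCast (C : ℂ →+* (MvPolynomial (Fin 3) ℂ)), ← C_mul,
    inv_mul_cancel₀ (Nat.cast_ne_zero.2 (by omega)), C_1, one_mul] at h3

/-- Spanning: a subspace containing `E_f`, stable under `f`, and containing monomials spanning
modulo the Jacobian ideal is everything. -/
lemma bk_span (f : (MvPolynomial (Fin 3) ℂ)) (d : ℕ) (hd : 1 < d) (hf : f.IsHomogeneous d) (s : Set (MvPolynomial (Fin 3) ℂ))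
    (hs : ∀ m ∈ s, ∃ k, IsHomogeneous m k) (N : Submodule ℂ (MvPolynomial (Fin 3) ℂ))
    (hE : Esub f ≤ N) (hN : ∀ g ∈ N, f * g ∈ N) (hsN : s ⊆ N)
    (hJ : ∀ g : (MvPolynomial (Fin 3) ℂ), ∃ h ∈ Submodule.span ℂ s,
      g - h ∈ Ideal.span ({pderiv 0 f, pderiv 1 f, pderiv 2 f} : Set (MvPolynomial (Fin 3) ℂ))) (g : (MvPolynomial (Fin 3) ℂ)) : g ∈ N := by
  have hcomp : ∀ n, ∀ h ∈ Submodule.span ℂ s, homogeneousComponent n h ∈ N := by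
    intro n h hh
    have : Submodule.span ℂ s ≤ N.comap (homogeneousComponent n) := by
      rw [Submodule.span_le]
      intro m hm
      obtain ⟨k, hk⟩ := hs m hm
      simp only [Submodule.comap_coe, Set.mem_preimage, SetLike.mem_coe]
      rw [homogeneousComponent_of_mem hk]
      split_ifs
      · exact hsN hm
      · exact N.zero_mem
    exact this hh
  have key : ∀ n : ℕ, ∀ g : (MvPolynomial (Fin 3) ℂ), g.IsHomogeneous n → g ∈ N := by
    intro n
    induction n using Nat.strong_induction_on with
    | _ n ih =>
      intro g hg
      obtain ⟨h, hh, hgh⟩ := hJ g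
      obtain ⟨u, v, w, huvw⟩ := bk_mem_span3 _ _ _ _ hgh
      have h1 := congrArg (homogeneousComponent n) huvw
      rw [map_sub, homogeneousComponent_eq_self hg, sub_eq_iff_eq_add'] at h1
      rw [h1]
      refine N.add_mem (hcomp n h hh) ?_
      by_cases hn : n < d - 1
      · simp only [map_add, bk_comp_mul_lt (d - 1) n _ _ hf.pderiv hn]
        simp
      · obtain ⟨e, rfl⟩ := Nat.exists_eq_add_of_le (not_lt.1 hn)
        simp only [map_add, bk_comp_mul (d - 1) e _ _ hf.pderiv]
        have hu := homogeneousComponent_isHomogeneous e u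
        have hv := homogeneousComponent_isHomogeneous e v
        have hw := homogeneousComponent_isHomogeneous e w
        have hr := hE (bk_reduce f d hf e _ _ _ hu hv hw)
        have hdiv := hN _ (ih (e - 1) (by omega) _ ((hu.pderiv (i := 0)).add (hv.pderiv (i := 1))
          |>.add (hw.pderiv (i := 2))))
        have hdiv2 := N.add_mem hr (N.smul_mem (d : ℂ) hdiv)
        rw [Nat.cast_smul_eq_nsmul, nsmul_eq_mul, sub_add_cancel, ← nsmul_eq_mul,
          ← Nat.cast_smul_eq_nsmul ℂ] at hdiv2
        exact (N.smul_mem_iff (Nat.cast_ne_zero.2 (by omega))).1 hdiv2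
  exact bk_mem_of_comp N g fun n => key n _ (homogeneousComponent_isHomogeneous n g)

lemma bk_linind {ι B W : Type*} [AddCommGroup B] [Module ℂ B] [Module (Polynomial ℂ) B]
    [IsScalarTower ℂ (Polynomial ℂ) B] [AddCommGroup W] [Module ℂ W] (π : B →ₗ[ℂ] W)
    (hπ : ∀ b, π ((Polynomial.X : Polynomial ℂ) • b) = 0)
    (hinj : ∀ b : B, (Polynomial.X : Polynomial ℂ) • b = 0 → b = 0) (v : ι → B)
    (hv : LinearIndependent ℂ (fun i => π (v i))) : LinearIndependent (Polynomial ℂ) v := by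
  have hπ2 : ∀ (p : Polynomial ℂ) (b : B), π (p • b) = p.coeff 0 • π b := by
    intro p b
    conv_lhs => rw [← Polynomial.X_mul_divX_add p]
    rw [add_smul, mul_smul, map_add, hπ, zero_add, ← Polynomial.algebraMap_eq, algebraMap_smul,
      map_smul]
  rw [linearIndependent_iff']
  intro s
  have key : ∀ n : ℕ, ∀ g : ι → Polynomial ℂ, ∑ i ∈ s, g i • v i = 0 →
      ∀ i ∈ s, Polynomial.X ^ n ∣ g i := by
    intro n
    induction n with
    | zero => intro g _ i _; simp
    | succ n ih =>
      intro g hg i hi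
      have h1 := congrArg π hg
      rw [map_sum, map_zero] at h1
      simp only [hπ2] at h1
      have h2 := linearIndependent_iff'.1 hv s (fun i => (g i).coeff 0) h1
      have h3 : ∀ i ∈ s, g i = Polynomial.X * (g i).divX := by
        intro i hi
        conv_lhs => rw [← Polynomial.X_mul_divX_add (g i)]
        rw [h2 i hi]; simp
      have h4 : ∑ i ∈ s, (g i).divX • v i = 0 := by
        apply hinj
        rw [Finset.smul_sum, ← hg]
        refine Finset.sum_congr rfl fun i hi => ?_
        rw [smul_smul, ← h3 i hi]
      rw [h3 i hi, pow_succ']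
      exact mul_dvd_mul_left _ (ih _ h4 i hi)
  intro g hg i hi
  refine Polynomial.eq_zero_of_dvd_of_natDegree_lt (key ((g i).natDegree + 1) g hg i hi) ?_
  simp

/-- For `f ∈ ℂ[x,y,z]` homogeneous of degree `d > 1` with an isolated
singularity at the origin, the Brieskorn module `B(f) = ℂ[x,y,z]/E_f`, as a
`ℂ[t]`-module with `t` acting by multiplication by `f`, is free of rank
`μ(f) = dim_ℂ ℂ[x,y,z]/J_f`. -/
theorem statement3 (f : MvPolynomial (Fin 3) ℂ) (d : ℕ) (hd : 1 < d)
    (hf : f.IsHomogeneous d)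
    (hiso : ∀ p : Fin 3 → ℂ,
      eval p (pderiv 0 f) = 0 → eval p (pderiv 1 f) = 0 → eval p (pderiv 2 f) = 0 →
        p = 0) :
    Module.Free (Polynomial ℂ) (Module.AEval' (Bmul f)) ∧
      Module.rank (Polynomial ℂ) (Module.AEval' (Bmul f)) =
        Module.rank ℂ
          (MvPolynomial (Fin 3) ℂ ⧸
            Ideal.span ({pderiv 0 f, pderiv 1 f, pderiv 2 f} :
              Set (MvPolynomial (Fin 3) ℂ))) := by
  classical
  set J := Ideal.span ({pderiv 0 f, pderiv 1 f, pderiv 2 f} : Set (MvPolynomial (Fin 3) ℂ)) with hJ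
  let mk : (MvPolynomial (Fin 3) ℂ) →ₗ[ℂ] ((MvPolynomial (Fin 3) ℂ) ⧸ J) := (Ideal.Quotient.mkₐ ℂ J).toLinearMap
  have hmk : ∀ g, mk g = 0 ↔ g ∈ J := fun g => Ideal.Quotient.eq_zero_iff_mem
  have hmks : Function.Surjective mk := Ideal.Quotient.mk_surjective
  let t : Set ((MvPolynomial (Fin 3) ℂ) ⧸ J) := Set.range (fun s : Fin 3 →₀ ℕ => mk (monomial s 1))
  have ht : ⊤ ≤ Submodule.span ℂ t := by
    rintro x -
    obtain ⟨g, rfl⟩ := hmks x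
    rw [g.as_sum, map_sum]
    refine Submodule.sum_mem _ fun s _ => ?_
    have : monomial s (coeff s g) = (coeff s g) • (monomial s 1 : (MvPolynomial (Fin 3) ℂ)) := by
      rw [smul_monomial, smul_eq_mul, mul_one]
    rw [this, map_smul]
    exact Submodule.smul_mem _ _ (Submodule.subset_span ⟨s, rfl⟩)
  let b := Module.Basis.ofSpan ht
  have hb : ∀ i, ∃ s : Fin 3 →₀ ℕ, mk (monomial s 1) = b i := fun i =>
    Module.Basis.ofSpan_subset ht ⟨i, rfl⟩
  choose s hs using hb
  let π : Module.AEval' (Bmul f) →ₗ[ℂ] ((MvPolynomial (Fin 3) ℂ) ⧸ J) :=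
    ((Esub f).liftQ mk (fun w hw => (hmk w).2 (bk_Esub_le f w hw))) ∘ₗ
      (Module.AEval'.of (Bmul f)).symm.toLinearMap
  let cl : (MvPolynomial (Fin 3) ℂ) →ₗ[ℂ] Module.AEval' (Bmul f) :=
    (Module.AEval'.of (Bmul f)).toLinearMap ∘ₗ (Esub f).mkQ
  have hcls : Function.Surjective cl :=
    (Module.AEval'.of (Bmul f)).surjective.comp (Submodule.mkQ_surjective _)
  have hcl0 : ∀ g, cl g = 0 ↔ g ∈ Esub f := by
    intro g
    simp [cl]
  have hclX : ∀ g, (Polynomial.X : Polynomial ℂ) • cl g = cl (f * g) := fun g =>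
    Module.AEval'.X_smul_of (Bmul f) _
  have hπcl : ∀ g, π (cl g) = mk g := fun g => rfl
  have hli : LinearIndependent (Polynomial ℂ) (fun i => cl (monomial (s i) 1)) := by
    refine bk_linind π ?_ ?_ _ ?_
    · intro x
      obtain ⟨g, rfl⟩ := hcls x
      rw [hclX, hπcl, hmk]
      exact Ideal.mul_mem_right _ _ (bk_f_mem f d hd hf)
    · intro x hx
      obtain ⟨g, rfl⟩ := hcls x
      rw [hclX, hcl0] at hx
      rw [hcl0]
      exact bk_inj f d hd hf hiso g hx
    · simp only [hπcl, hs]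
      exact b.linearIndependent
  have hsp : ⊤ ≤ Submodule.span (Polynomial ℂ) (Set.range (fun i => cl (monomial (s i) 1))) := by
    rintro x -
    obtain ⟨g, rfl⟩ := hcls x
    set N := Submodule.span (Polynomial ℂ) (Set.range (fun i => cl (monomial (s i) 1))) with hN
    refine bk_span f d hd hf (Set.range fun i => monomial (s i) (1 : ℂ)) ?_
      ((N.restrictScalars ℂ).comap cl) ?_ ?_ ?_ ?_ g
    · rintro _ ⟨i, rfl⟩
      exact ⟨_, isHomogeneous_monomial _ rfl⟩
    · intro w hw
      rw [Submodule.mem_comap, (hcl0 w).2 hw]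
      exact Submodule.zero_mem _
    · intro g hg
      rw [Submodule.mem_comap, ← hclX]
      exact N.smul_mem _ hg
    · rintro _ ⟨i, rfl⟩
      exact Submodule.subset_span ⟨i, rfl⟩
    · intro g
      have h1 : mk g ∈ (Submodule.span ℂ (Set.range fun i => monomial (s i) (1 : ℂ))).map mk := by
        rw [Submodule.map_span, ← Set.range_comp]
        have : (mk ∘ fun i => monomial (s i) (1 : ℂ)) = b := funext hs
        rw [this, b.span_eq]
        trivial
      obtain ⟨h, hh, e⟩ := h1
      refine ⟨h, hh, ?_⟩
      rw [← hJ, ← hmk, map_sub, e, sub_self]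
  let B := Module.Basis.mk hli hsp
  refine ⟨Module.Free.of_basis B, ?_⟩
  rw [← B.mk_eq_rank'', ← b.mk_eq_rank'']
end

section
/- Let f ∈ ℂ[x,y] be a primitive homogeneous polynomial of degree d > 1, i.e. f is not of the form g^r for any g ∈ ℂ[x,y] and any integer r > 1. Then C(f) = J_f/D_f, regarded as a module over ℂ[t] with t acting by multiplication by f, is a free ℂ[t]-module of finite rank. -/
open MvPolynomial

/-- The linear map `g ↦ f_x·∂g/∂y − f_y·∂g/∂x` whose range is `D_f`. -/
noncomputable def Dmap (f : MvPolynomial (Fin 2) ℂ) :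
    MvPolynomial (Fin 2) ℂ →ₗ[ℂ] MvPolynomial (Fin 2) ℂ where
  toFun g := pderiv 0 f * pderiv 1 g - pderiv 1 f * pderiv 0 g
  map_add' g h := by simp only [map_add]; ring
  map_smul' c g := by
    simp only [Derivation.map_smul, RingHom.id_apply, smul_sub, mul_smul_comm]

/-- `D_f` as a `ℂ`-subspace of `ℂ[x,y]`. -/
noncomputable def Dsub (f : MvPolynomial (Fin 2) ℂ) :
    Submodule ℂ (MvPolynomial (Fin 2) ℂ) :=
  LinearMap.range (Dmap f)

/-- The Jacobian ideal `J_f = (f_x, f_y)` regarded as a `ℂ`-subspace of `ℂ[x,y]`. -/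
noncomputable def Jsub (f : MvPolynomial (Fin 2) ℂ) :
    Submodule ℂ (MvPolynomial (Fin 2) ℂ) :=
  Submodule.restrictScalars ℂ
    (Ideal.span ({pderiv 0 f, pderiv 1 f} : Set (MvPolynomial (Fin 2) ℂ)))

lemma mulLeft_mem_Jsub (f : MvPolynomial (Fin 2) ℂ) :
    ∀ x ∈ Jsub f, f * x ∈ Jsub f := fun _ hx =>
  Ideal.mul_mem_left _ f hx

/-- Multiplication by `f` on `J_f`. -/
noncomputable def Jmul (f : MvPolynomial (Fin 2) ℂ) : Jsub f →ₗ[ℂ] Jsub f :=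
  (LinearMap.mulLeft ℂ f).restrict (p := Jsub f) (q := Jsub f) (mulLeft_mem_Jsub f)

lemma Jmul_le_comap (f : MvPolynomial (Fin 2) ℂ) :
    (Dsub f).comap (Jsub f).subtype ≤
      ((Dsub f).comap (Jsub f).subtype).comap (Jmul f) := by
  rintro ⟨x, hx⟩ ⟨g, hg⟩
  refine ⟨f * g, ?_⟩
  simp only [Dmap, LinearMap.coe_mk, AddHom.coe_mk, pderiv_mul] at hg ⊢
  have hgx : pderiv 0 f * pderiv 1 g - pderiv 1 f * pderiv 0 g = x := hg
  have h2 : (Jsub f).subtype (Jmul f ⟨x, hx⟩) = f * x := rfl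
  rw [h2, ← hgx]
  ring

/-- Multiplication by `f` on `C(f) = J_f/D_f` (the action of `t`). -/
noncomputable def Cmul (f : MvPolynomial (Fin 2) ℂ) :
    (Jsub f ⧸ (Dsub f).comap (Jsub f).subtype) →ₗ[ℂ]
      (Jsub f ⧸ (Dsub f).comap (Jsub f).subtype) :=
  Submodule.mapQ _ _ (Jmul f) (Jmul_le_comap f)

namespace S8

local notation "P2" => MvPolynomial (Fin 2) ℂ

lemma pderiv_totalDegree_lt (p : P2) (i : Fin 2) (h : pderiv i p ≠ 0) :
    (pderiv i p).totalDegree + 1 ≤ p.totalDegree := by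
  obtain ⟨m, hm, hm2⟩ := Finset.exists_mem_eq_sup (pderiv i p).support
    (by simpa using h) (fun s => s.sum fun _ e => e)
  have h1 : m + Finsupp.single i 1 ∈ p.support := by
    rw [mem_support_iff, coeff_pderiv] at hm
    rw [mem_support_iff]
    intro h0
    simp [h0] at hm
  have h2 := le_totalDegree h1
  rw [Finsupp.sum_add_index' (by simp) (by simp)] at h2
  rw [totalDegree, hm2]
  simpa using h2

lemma pderiv_eq_zero_of_dvd (p : P2) (i : Fin 2) (h : p ∣ pderiv i p) : pderiv i p = 0 := by
  by_contra h0
  have h1 := pderiv_totalDegree_lt p i h0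
  obtain ⟨r, hr⟩ := h
  have hp : p ≠ 0 := by rintro rfl; simp at h0
  have hr0 : r ≠ 0 := by rintro rfl; simp [hr] at h0
  rw [hr, totalDegree_mul_of_isDomain hp hr0] at h1
  omega

lemma eq_C_of_pderiv (p : P2) (h0 : pderiv 0 p = 0) (h1 : pderiv 1 p = 0) :
    p = C (coeff 0 p) := by
  ext m
  rw [coeff_C]
  split_ifs with hm
  · rw [← hm]
  · have key : ∀ i : Fin 2, m i ≠ 0 → pderiv i p = 0 → coeff m p = 0 := by
      intro i hi hp
      have := coeff_pderiv (i := i) p (m - Finsupp.single i 1)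
      rw [hp, coeff_zero] at this
      have e : m - Finsupp.single i 1 + Finsupp.single i 1 = m := by
        ext j
        by_cases hj : j = i
        · subst hj; simp; omega
        · simp [Ne.symm hj]
      rw [e] at this
      rcases mul_eq_zero.mp this.symm with h | h
      · exact h
      · exfalso
        norm_cast at h
    by_cases a : m 0 = 0
    · by_cases b : m 1 = 0
      · exfalso
        apply hm
        ext j
        fin_cases j <;> simp [a, b]
      · exact key 1 b h1
    · exact key 0 a h0

lemma not_dvd_nat (p : P2) (hp : Prime p) (n : ℕ) (hn : n ≠ 0) : ¬ p ∣ (n : P2) := by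
  intro h
  apply hp.not_isUnit
  refine isUnit_of_dvd_unit h ?_
  have : (n : P2) = C (n : ℂ) := by simp
  rw [this]
  exact (IsUnit.mk0 (n : ℂ) (by exact_mod_cast hn)).map C

lemma mul_pderiv_pow (p : P2) (i : Fin 2) (n : ℕ) :
    p * pderiv i (p ^ n) = n * p ^ n * pderiv i p := by
  cases n with
  | zero => simp
  | succ n => rw [pderiv_pow]; simp only [Nat.add_sub_cancel]; ring

lemma mul_pderiv_pow_mul (p a : P2) (i : Fin 2) (n : ℕ) :
    p * pderiv i (p ^ n * a) = p ^ n * (n * pderiv i p * a + p * pderiv i a) := by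
  rw [pderiv_mul, mul_add, ← mul_assoc, mul_pderiv_pow]; ring

/-- eigen property of factors for the Euler derivation -/
lemma euler_factor (p a : P2) (hp : p ≠ 0) (n : ℕ) (d : P2)
    (h : X 0 * pderiv 0 (p ^ n * a) + X 1 * pderiv 1 (p ^ n * a) = d * (p ^ n * a)) :
    p * (X 0 * pderiv 0 a + X 1 * pderiv 1 a) +
      (n : P2) * a * (X 0 * pderiv 0 p + X 1 * pderiv 1 p) = d * p * a := by
  apply mul_left_cancel₀ (pow_ne_zero n hp)
  have h0 := mul_pderiv_pow_mul p a 0 n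
  have h1 := mul_pderiv_pow_mul p a 1 n
  linear_combination p * h - X 0 * h0 - X 1 * h1

lemma key_false (p a b q : P2) (hp : Prime p) (ha : ¬ p ∣ a) (hb : ¬ p ∣ b) (m s d k : ℕ)
    (hsm : s < m) (hd : 0 < d) (hdk : d ≤ k)
    (hf : X 0 * pderiv 0 (p ^ m * a) + X 1 * pderiv 1 (p ^ m * a) = (d : P2) * (p ^ m * a))
    (hg : X 0 * pderiv 0 (p ^ s * b) + X 1 * pderiv 1 (p ^ s * b) = (k : P2) * (p ^ s * b))
    (h : pderiv 0 (p ^ m * a) * pderiv 1 (p ^ s * b) - pderiv 1 (p ^ m * a) * pderiv 0 (p ^ s * b)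
      = (p ^ m * a) ^ 2 * q) : False := by
  have hf' := euler_factor p a hp.ne_zero m d hf
  have hg' := euler_factor p b hp.ne_zero s k hg
  have hE : p ∣ X 0 * pderiv 0 p + X 1 * pderiv 1 p := by
    have : p ∣ (m : P2) * a * (X 0 * pderiv 0 p + X 1 * pderiv 1 p) :=
      ⟨(d : P2) * a - (X 0 * pderiv 0 a + X 1 * pderiv 1 a), by linear_combination hf'⟩
    rcases hp.dvd_or_dvd this with h | h
    · rcases hp.dvd_or_dvd h with h | h
      · exact absurd h (not_dvd_nat p hp m (by omega))
      · exact absurd h ha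
    · exact h
  obtain ⟨c, hc⟩ := hE
  have Ea : X 0 * pderiv 0 a + X 1 * pderiv 1 a = ((d : P2) - (m : P2) * c) * a := by
    apply mul_left_cancel₀ hp.ne_zero
    linear_combination hf' - (m : P2) * a * hc
  have Eb : X 0 * pderiv 0 b + X 1 * pderiv 1 b = ((k : P2) - (s : P2) * c) * b := by
    apply mul_left_cancel₀ hp.ne_zero
    linear_combination hg' - (s : P2) * b * hc
  obtain ⟨j, rfl⟩ : ∃ j, m = s + 1 + j := ⟨m - s - 1, by omega⟩
  set m := s + 1 + j with hm
  have hB : p * (p * (pderiv 0 a * pderiv 1 b - pderiv 1 a * pderiv 0 b)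
      + m * a * (pderiv 0 p * pderiv 1 b - pderiv 1 p * pderiv 0 b)
      + s * b * (pderiv 0 a * pderiv 1 p - pderiv 1 a * pderiv 0 p)) =
      p * (p * (p ^ j * a ^ 2 * q * p)) := by
    apply mul_left_cancel₀ (pow_ne_zero (m + s) hp.ne_zero)
    have h0 := mul_pderiv_pow_mul p a 0 m
    have h1 := mul_pderiv_pow_mul p a 1 m
    have h2 := mul_pderiv_pow_mul p b 0 s
    have h3 := mul_pderiv_pow_mul p b 1 s
    have e : p ^ (m + s) * (p * (p * (p ^ j * a ^ 2 * q * p))) = p * p * ((p ^ m * a) ^ 2 * q) := by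
      rw [hm]; ring
    rw [e, ← h]
    have e2 : p * p * (pderiv 0 (p ^ m * a) * pderiv 1 (p ^ s * b)
        - pderiv 1 (p ^ m * a) * pderiv 0 (p ^ s * b)) =
        (p * pderiv 0 (p ^ m * a)) * (p * pderiv 1 (p ^ s * b))
        - (p * pderiv 1 (p ^ m * a)) * (p * pderiv 0 (p ^ s * b)) := by ring
    rw [e2, h0, h1, h2, h3]
    ring
  have hB' := mul_left_cancel₀ hp.ne_zero hB
  have hN : ((m * k - s * d : ℕ) : P2) = m * k - s * d := by
    rw [Nat.cast_sub]
    · push_cast; ring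
    · exact Nat.mul_le_mul (by omega) hdk
  have hN0 : m * k - s * d ≠ 0 := by
    have : s * d < m * k := Nat.mul_lt_mul_of_lt_of_le hsm hdk (by omega)
    omega
  have fin : ∀ z : P2, p ∣ z * (a * b * ((m * k - s * d : ℕ) : P2)) → p ∣ z := by
    intro z hz
    rcases hp.dvd_or_dvd hz with h | h
    · exact h
    · rcases hp.dvd_or_dvd h with h | h
      · rcases hp.dvd_or_dvd h with h | h
        · exact absurd h ha
        · exact absurd h hb
      · exact absurd h (not_dvd_nat p hp _ hN0)
  have d1 : p ∣ pderiv 1 p := by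
    apply fin
    rw [hN]
    refine ⟨X 0 * (pderiv 0 a * pderiv 1 b - pderiv 1 a * pderiv 0 b)
      + (m : P2) * a * c * pderiv 1 b - (s : P2) * b * c * pderiv 1 a - X 0 * (p ^ j * a ^ 2 * q * p), ?_⟩
    linear_combination (-X 0) * hB' + ((m : P2) * a * pderiv 1 b - (s : P2) * b * pderiv 1 a) * hc
      - (m : P2) * a * pderiv 1 p * Eb + (s : P2) * b * pderiv 1 p * Ea
  have d0 : p ∣ pderiv 0 p := by
    apply fin
    rw [hN]
    refine ⟨- X 1 * (pderiv 0 a * pderiv 1 b - pderiv 1 a * pderiv 0 b)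
      + (m : P2) * a * c * pderiv 0 b - (s : P2) * b * c * pderiv 0 a + X 1 * (p ^ j * a ^ 2 * q * p), ?_⟩
    linear_combination (X 1) * hB' + ((m : P2) * a * pderiv 0 b - (s : P2) * b * pderiv 0 a) * hc
      - (m : P2) * a * pderiv 0 p * Eb + (s : P2) * b * pderiv 0 p * Ea
  have hC := eq_C_of_pderiv p (pderiv_eq_zero_of_dvd p 0 d0) (pderiv_eq_zero_of_dvd p 1 d1)
  have hne : coeff 0 p ≠ 0 := by
    intro h0; rw [h0, C_0] at hC; exact hp.ne_zero hC
  apply hp.not_isUnit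
  rw [hC]
  exact (IsUnit.mk0 _ hne).map C

lemma dvd_of_sq (f g q : P2) (d k : ℕ) (hf0 : f ≠ 0) (hd : 0 < d) (hdk : d ≤ k)
    (hf : X 0 * pderiv 0 f + X 1 * pderiv 1 f = (d : P2) * f)
    (hg : X 0 * pderiv 0 g + X 1 * pderiv 1 g = (k : P2) * g)
    (h : Dmap f g = f ^ 2 * q) : f ∣ g := by
  obtain ⟨g', f', c, hrel, hcg, hcf⟩ := UniqueFactorizationMonoid.exists_reduced_factors' g f hf0
  have hc0 : c ≠ 0 := by rintro rfl; simp at hcf; exact hf0 hcf.symm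
  have hf'0 : f' ≠ 0 := by rintro rfl; simp at hcf; exact hf0 hcf.symm
  by_cases hu : IsUnit f'
  · rw [← hcf, ← hcg]
    exact mul_dvd_mul_left c (hu.dvd)
  · exfalso
    obtain ⟨p, hpi, hpf⟩ := WfDvdMonoid.exists_irreducible_factor hu hf'0
    have hp : Prime p := UniqueFactorizationMonoid.irreducible_iff_prime.mp hpi
    have hpg : ¬ p ∣ g' := fun hh => hp.not_isUnit (hrel hh hpf)
    obtain ⟨c1, hc1, hpc1⟩ :=
      (FiniteMultiplicity.of_not_isUnit hp.not_isUnit hc0).exists_eq_pow_mul_and_not_dvd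
    obtain ⟨f1, hf1, hpf1⟩ :=
      (FiniteMultiplicity.of_not_isUnit hp.not_isUnit hf'0).exists_eq_pow_mul_and_not_dvd
    set s := multiplicity p c
    set n := multiplicity p f'
    have hn : n ≠ 0 := by
      intro hn
      rw [hn, pow_zero, one_mul] at hf1
      exact hpf1 (hf1 ▸ hpf)
    have ef : f = p ^ (s + n) * (c1 * f1) := by rw [← hcf, hc1, hf1]; ring
    have eg : g = p ^ s * (c1 * g') := by rw [← hcg, hc1]; ring
    rw [eg] at hg
    rw [ef] at hf
    refine key_false p (c1 * f1) (c1 * g') q hp ?_ ?_ (s + n) s d k (by omega) hd hdk hf hg ?_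
    · exact fun hh => (hp.dvd_or_dvd hh).elim hpc1 hpf1
    · exact fun hh => (hp.dvd_or_dvd hh).elim hpc1 hpg
    · rw [← ef, ← eg]; exact h

lemma mem_of_comp (W : Submodule ℂ P2) (g : P2) (h : ∀ n, homogeneousComponent n g ∈ W) :
    g ∈ W := by
  rw [← sum_homogeneousComponent g]
  exact Submodule.sum_mem _ fun n _ => h n

lemma comp_linear (L : P2 →ₗ[ℂ] P2) (e : ℕ)
    (hL : ∀ n g, g.IsHomogeneous n → (L g).IsHomogeneous (n + e)) (g : P2) (n : ℕ) :
    homogeneousComponent (n + e) (L g) = L (homogeneousComponent n g) := by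
  have key : ∀ i, homogeneousComponent (n + e) (L (homogeneousComponent i g)) =
      L (homogeneousComponent n (homogeneousComponent i g)) := by
    intro i
    have h1 := hL i _ (homogeneousComponent_isHomogeneous i g)
    rw [homogeneousComponent_of_mem h1,
      homogeneousComponent_of_mem (homogeneousComponent_isHomogeneous i g)]
    by_cases hi : n = i
    · subst hi; simp
    · rw [if_neg (by omega), if_neg hi, map_zero]
  conv_lhs => rw [← sum_homogeneousComponent g]
  conv_rhs => rw [← sum_homogeneousComponent g]
  simp only [map_sum, key]

lemma comp_linear_lt (L : P2 →ₗ[ℂ] P2) (e : ℕ)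
    (hL : ∀ n g, g.IsHomogeneous n → (L g).IsHomogeneous (n + e)) (g : P2) (n : ℕ) (hn : n < e) :
    homogeneousComponent n (L g) = 0 := by
  conv_lhs => rw [← sum_homogeneousComponent g]
  rw [map_sum, map_sum]
  apply Finset.sum_eq_zero
  intro i _
  have h1 := hL i _ (homogeneousComponent_isHomogeneous i g)
  rw [homogeneousComponent_of_mem h1, if_neg (by omega)]

lemma euler {f : P2} {d : ℕ} (hf : f.IsHomogeneous d) :
    X 0 * pderiv 0 f + X 1 * pderiv 1 f = (d : P2) * f := by
  have := hf.sum_X_mul_pderiv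
  rw [Fin.sum_univ_two] at this
  rw [this, nsmul_eq_mul]

lemma Dmap_apply (f g : P2) :
    Dmap f g = pderiv 0 f * pderiv 1 g - pderiv 1 f * pderiv 0 g := rfl

lemma Dmap_hom {f : P2} {d : ℕ} (hd : 1 < d) (hf : f.IsHomogeneous d) (n : ℕ) (g : P2)
    (hg : g.IsHomogeneous n) : (Dmap f g).IsHomogeneous (n + (d - 2)) := by
  rw [Dmap_apply]
  rcases Nat.eq_zero_or_pos n with rfl | hn
  · have := (totalDegree_zero_iff_isHomogeneous _).mpr hg
    rw [totalDegree_eq_zero_iff_eq_C.mp this]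
    simp [isHomogeneous_zero]
  · have e : n + (d - 2) = (d - 1) + (n - 1) := by omega
    rw [e]
    exact (hf.pderiv.mul hg.pderiv).sub (hf.pderiv.mul hg.pderiv)

lemma mul_hom {f : P2} {d : ℕ} (hf : f.IsHomogeneous d) (n : ℕ) (g : P2)
    (hg : g.IsHomogeneous n) : (LinearMap.mulLeft ℂ f g).IsHomogeneous (n + d) := by
  rw [add_comm]; exact hf.mul hg

lemma mem_Jsub (f h : P2) : h ∈ Jsub f ↔ ∃ a b, a * pderiv 0 f + b * pderiv 1 f = h := by
  unfold Jsub
  rw [Submodule.restrictScalars_mem, Ideal.mem_span_pair]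

lemma Dsub_le_Jsub (f : P2) : Dsub f ≤ Jsub f := by
  rintro _ ⟨g, rfl⟩
  rw [mem_Jsub]
  exact ⟨pderiv 1 g, - pderiv 0 g, by rw [Dmap_apply]; ring⟩

lemma comp_mem_Jsub {f : P2} {d : ℕ} (hf : f.IsHomogeneous d) (h : P2) (hh : h ∈ Jsub f) (n : ℕ) :
    homogeneousComponent n h ∈ Jsub f := by
  have key : ∀ (i : Fin 2) (a : P2), pderiv i f ∈ Jsub f →
      homogeneousComponent n (LinearMap.mulLeft ℂ (pderiv i f) a) ∈ Jsub f := by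
    intro i a hi
    rcases lt_or_ge n (d - 1) with hn | hn
    · rw [comp_linear_lt _ (d - 1) (mul_hom hf.pderiv) a n hn]; exact zero_mem _
    · obtain ⟨k, rfl⟩ : ∃ k, n = k + (d - 1) := ⟨n - (d - 1), by omega⟩
      rw [comp_linear _ (d - 1) (mul_hom hf.pderiv)]
      rw [LinearMap.mulLeft_apply, mul_comm]
      exact Ideal.mul_mem_left _ _ hi
  obtain ⟨a, b, rfl⟩ := (mem_Jsub f h).mp hh
  rw [map_add]
  refine add_mem ?_ ?_
  · have := key 0 a ((mem_Jsub _ _).mpr ⟨1, 0, by simp⟩)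
    rwa [LinearMap.mulLeft_apply, mul_comm] at this
  · have := key 1 b ((mem_Jsub _ _).mpr ⟨0, 1, by simp⟩)
    rwa [LinearMap.mulLeft_apply, mul_comm] at this

lemma comp_mem_Dsub {f : P2} {d : ℕ} (hd : 1 < d) (hf : f.IsHomogeneous d) (h : P2)
    (hh : h ∈ Dsub f) (n : ℕ) : homogeneousComponent n h ∈ Dsub f := by
  obtain ⟨g, rfl⟩ := hh
  rcases lt_or_ge n (d - 2) with hn | hn
  · rw [comp_linear_lt _ (d - 2) (Dmap_hom hd hf) g n hn]; exact zero_mem _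
  · obtain ⟨k, rfl⟩ : ∃ k, n = k + (d - 2) := ⟨n - (d - 2), by omega⟩
    rw [comp_linear _ (d - 2) (Dmap_hom hd hf)]
    exact ⟨_, rfl⟩

lemma mul_mem_Dsub (f h : P2) (hh : h ∈ Dsub f) : f * h ∈ Dsub f := by
  obtain ⟨g, rfl⟩ := hh
  refine ⟨f * g, ?_⟩
  rw [Dmap_apply, Dmap_apply, pderiv_mul, pderiv_mul]
  ring

lemma Jsub_le {f : P2} {d : ℕ} (hf : f.IsHomogeneous d) :
    Jsub f ≤ Dsub f ⊔ LinearMap.range (LinearMap.mulLeft ℂ f) := by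
  set W := Dsub f ⊔ LinearMap.range (LinearMap.mulLeft ℂ f) with hW
  have key : ∀ (n : ℕ) (a b : P2), a.IsHomogeneous n → b.IsHomogeneous n →
      a * pderiv 0 f + b * pderiv 1 f ∈ W := by
    intro n a b ha hb
    have hne : ((n : ℂ) + 1) ≠ 0 := by exact_mod_cast Nat.succ_ne_zero n
    rw [← W.smul_mem_iff hne]
    have e : ((n : ℂ) + 1) • (a * pderiv 0 f + b * pderiv 1 f) =
        Dmap f (X 1 * a - X 0 * b) + f * ((d : P2) * (pderiv 0 a + pderiv 1 b)) := by
      have ef := euler hf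
      have ea := euler ha
      have eb := euler hb
      rw [Dmap_apply, smul_eq_C_mul]
      simp only [map_sub, pderiv_mul, pderiv_X_self, map_add, map_natCast, map_one,
        pderiv_X_of_ne (show (1 : Fin 2) ≠ 0 by decide),
        pderiv_X_of_ne (show (0 : Fin 2) ≠ 1 by decide)]
      linear_combination (pderiv 0 a + pderiv 1 b) * ef - pderiv 0 f * ea - pderiv 1 f * eb
    rw [e]
    exact Submodule.add_mem_sup ⟨_, rfl⟩ ⟨_, rfl⟩
  intro h hh
  obtain ⟨a, b, rfl⟩ := (mem_Jsub f h).mp hh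
  refine add_mem ?_ ?_
  · have : a ∈ W.comap (LinearMap.mulRight ℂ (pderiv 0 f)) := by
      apply mem_of_comp
      intro n
      have := key n _ 0 (homogeneousComponent_isHomogeneous n a) (isHomogeneous_zero _ _ _)
      simpa using this
    exact this
  · have : b ∈ W.comap (LinearMap.mulRight ℂ (pderiv 1 f)) := by
      apply mem_of_comp
      intro n
      have := key n 0 _ (isHomogeneous_zero _ _ _) (homogeneousComponent_isHomogeneous n b)
      simpa using this
    exact this

lemma torsion_zero {f : P2} {d : ℕ} (hd : 1 < d) (hf : f.IsHomogeneous d) (hf0 : f ≠ 0)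
    (h : P2) (hJ : h ∈ Jsub f) (hD : f * h ∈ Dsub f) : h ∈ Dsub f := by
  obtain ⟨y, hy, z, ⟨q, rfl⟩, rfl⟩ := Submodule.mem_sup.mp (Jsub_le hf hJ)
  refine add_mem hy ?_
  rw [mul_add] at hD
  have h2 := (Submodule.add_mem_iff_right _ (mul_mem_Dsub f y hy)).mp hD
  obtain ⟨g, hg⟩ := h2
  have hsq : (f ^ 2).IsHomogeneous (d * 2) := hf.pow 2
  have : q ∈ (Dsub f).comap (LinearMap.mulLeft ℂ f) := by
    apply mem_of_comp
    intro n
    have h3 : Dmap f (homogeneousComponent (n + d + 2) g) = f ^ 2 * homogeneousComponent n q := by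
      rw [← comp_linear _ (d - 2) (Dmap_hom hd hf), hg,
        show n + d + 2 + (d - 2) = n + d * 2 by omega]
      have := comp_linear _ (d * 2) (mul_hom hsq) q n
      simp only [LinearMap.mulLeft_apply] at this ⊢
      rw [← this]
      congr 1
      ring
    obtain ⟨g1, hg1⟩ := dvd_of_sq f _ _ d (n + d + 2) hf0 (by omega) (by omega) (euler hf)
      (euler (homogeneousComponent_isHomogeneous _ g)) h3
    refine ⟨g1, ?_⟩
    rw [hg1] at h3
    rw [LinearMap.mulLeft_apply]
    apply mul_left_cancel₀ hf0
    rw [Dmap_apply, pderiv_mul, pderiv_mul] at h3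
    rw [Dmap_apply]
    linear_combination h3
  exact this

lemma torsion_ne {f : P2} {d : ℕ} (hd : 1 < d) (hf : f.IsHomogeneous d) (c : ℂ) (hc : c ≠ 0)
    (h : P2) (hD : f * h - c • h ∈ Dsub f) : h ∈ Dsub f := by
  apply mem_of_comp
  intro n
  induction n using Nat.strong_induction_on with
  | _ n ih =>
    have h1 := comp_mem_Dsub hd hf _ hD n
    rw [map_sub, map_smul] at h1
    have h2 : homogeneousComponent n (f * h) ∈ Dsub f := by
      rcases lt_or_ge n d with hn | hn
      · have := comp_linear_lt _ d (mul_hom hf) h n hn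
        rw [LinearMap.mulLeft_apply] at this
        rw [this]; exact zero_mem _
      · obtain ⟨k, rfl⟩ : ∃ k, n = k + d := ⟨n - d, by omega⟩
        have := comp_linear _ d (mul_hom hf) h k
        rw [LinearMap.mulLeft_apply] at this
        rw [this]
        exact mul_mem_Dsub _ _ (ih k (by omega))
    have h3 := sub_mem h2 h1
    rw [sub_sub_cancel] at h3
    exact ((Dsub f).smul_mem_iff hc).mp h3

lemma torsion {f : P2} {d : ℕ} (hd : 1 < d) (hf : f.IsHomogeneous d) (hf0 : f ≠ 0) (c : ℂ)
    (h : P2) (hJ : h ∈ Jsub f) (hD : f * h - c • h ∈ Dsub f) : h ∈ Dsub f := by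
  by_cases hc : c = 0
  · subst hc
    rw [zero_smul, sub_zero] at hD
    exact torsion_zero hd hf hf0 h hJ hD
  · exact torsion_ne hd hf c hc h hD

lemma ker_pair {f : P2} {d k : ℕ} (hd : 1 < d) (hf : f.IsHomogeneous d) (hf0 : f ≠ 0)
    (g1 g2 : P2) (h1 : g1.IsHomogeneous k) (h2 : g2.IsHomogeneous k) (h0 : g1 ≠ 0)
    (hD1 : Dmap f g1 = 0) (hD2 : Dmap f g2 = 0) : ∃ c : ℂ, c • g1 = g2 := by
  rw [Dmap_apply] at hD1 hD2
  have ef := euler hf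
  have e1 := euler h1
  have e2 := euler h2
  have hdf : (d : P2) * f ≠ 0 := mul_ne_zero (by exact_mod_cast (by omega : d ≠ 0)) hf0
  have hy : g1 * pderiv 1 g2 = g2 * pderiv 1 g1 := by
    apply mul_left_cancel₀ hdf
    linear_combination (X 0 * g1) * hD2 - (X 0 * g2) * hD1 - (g1 * pderiv 1 g2 - g2 * pderiv 1 g1) * ef
      + pderiv 1 f * (g1 * e2 - g2 * e1)
  have hx : g1 * pderiv 0 g2 = g2 * pderiv 0 g1 := by
    apply mul_left_cancel₀ hdf
    linear_combination (-X 1 * g1) * hD2 + (X 1 * g2) * hD1 - (g1 * pderiv 0 g2 - g2 * pderiv 0 g1) * ef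
      + pderiv 0 f * (g1 * e2 - g2 * e1)
  obtain ⟨v, u, c, hrel, hcv, hcu⟩ := UniqueFactorizationMonoid.exists_reduced_factors' g2 g1 h0
  have hc0 : c ≠ 0 := by rintro rfl; simp at hcu; exact h0 hcu.symm
  have hu0 : u ≠ 0 := by rintro rfl; simp at hcu; exact h0 hcu.symm
  have key : ∀ i : Fin 2, g1 * pderiv i g2 = g2 * pderiv i g1 →
      pderiv i u = 0 ∧ pderiv i v = 0 := by
    intro i hi
    rw [← hcv, ← hcu, pderiv_mul, pderiv_mul] at hi
    have h3 : u * pderiv i v = v * pderiv i u := by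
      apply mul_left_cancel₀ (pow_ne_zero 2 hc0)
      linear_combination hi
    have h4 : u ∣ pderiv i u := hrel.symm.dvd_of_dvd_mul_left ⟨_, h3.symm⟩
    have h5 := pderiv_eq_zero_of_dvd u i h4
    refine ⟨h5, ?_⟩
    rw [h5, mul_zero] at h3
    exact (mul_eq_zero.mp h3).resolve_left hu0
  obtain ⟨u0, v0⟩ := key 0 hx
  obtain ⟨u1, v1⟩ := key 1 hy
  have hu := eq_C_of_pderiv u u0 u1
  have hv := eq_C_of_pderiv v v0 v1
  have hα : coeff 0 u ≠ 0 := by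
    intro h; rw [h, C_0] at hu; exact hu0 hu
  refine ⟨coeff 0 v / coeff 0 u, ?_⟩
  rw [← hcu, ← hcv, smul_eq_C_mul]
  conv_rhs => rw [hv]
  conv_lhs => rw [hu]
  rw [coeff_C, if_pos rfl]
  rw [mul_left_comm, ← C_mul, div_mul_cancel₀ _ hα]

lemma finrank_H (n : ℕ) : Module.finrank ℂ (homogeneousSubmodule (Fin 2) ℂ n) = n + 1 := by
  rw [homogeneousSubmodule_eq_finsupp_supported]
  rw [LinearEquiv.finrank_eq (AddMonoidAlgebra.supportedEquivFinsupp _)]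
  let e : {m : Fin 2 →₀ ℕ | m.degree = n} ≃ Fin (n + 1) :=
    { toFun := fun m => ⟨m.1 0, by
        have := m.2
        simp only [Set.mem_ofPred_eq, Finsupp.degree_eq_sum, Fin.sum_univ_two] at this
        omega⟩
      invFun := fun i => ⟨Finsupp.equivFunOnFinite.symm ![i, n - i], by
        simp [Finsupp.degree_eq_sum, Fin.sum_univ_two]; omega⟩
      left_inv := by
        rintro ⟨m, hm⟩
        simp only [Set.mem_ofPred_eq, Finsupp.degree_eq_sum, Fin.sum_univ_two] at hm
        ext j
        fin_cases j
        · simp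
        · simp; omega
      right_inv := by
        intro i
        simp }
  rw [LinearEquiv.finrank_eq (Finsupp.domLCongr e), Module.finrank_finsupp_self, Fintype.card_fin]

instance finH (n : ℕ) : FiniteDimensional ℂ (homogeneousSubmodule (Fin 2) ℂ n) :=
  Module.finite_of_finrank_pos (by rw [finrank_H]; omega)

noncomputable def AA (f : P2) (n : ℕ) : Submodule ℂ P2 := Jsub f ⊓ homogeneousSubmodule (Fin 2) ℂ n
noncomputable def BB (f : P2) (n : ℕ) : Submodule ℂ P2 := Dsub f ⊓ homogeneousSubmodule (Fin 2) ℂ n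

instance finA (f : P2) (n : ℕ) : FiniteDimensional ℂ (AA f n) :=
  Submodule.finiteDimensional_of_le (inf_le_right : AA f n ≤ _)
instance finB (f : P2) (n : ℕ) : FiniteDimensional ℂ (BB f n) :=
  Submodule.finiteDimensional_of_le (inf_le_right : BB f n ≤ _)

lemma BB_le_AA (f : P2) (n : ℕ) : BB f n ≤ AA f n := inf_le_inf_right _ (Dsub_le_Jsub f)

lemma finrank_AA (f : P2) (n : ℕ) : Module.finrank ℂ (AA f n) ≤ n + 1 := by
  rw [← finrank_H n]
  exact Submodule.finrank_mono inf_le_right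

lemma finrank_BB {f : P2} {d : ℕ} (hd : 1 < d) (hf : f.IsHomogeneous d) (hf0 : f ≠ 0) (n : ℕ) :
    n ≤ Module.finrank ℂ (BB f (n + (d - 2))) := by
  set L := (Dmap f).domRestrict (homogeneousSubmodule (Fin 2) ℂ n) with hL
  have h1 := L.finrank_range_add_finrank_ker
  rw [finrank_H] at h1
  have h2 : Module.finrank ℂ (LinearMap.ker L) ≤ 1 := by
    by_cases hb : ∃ v : LinearMap.ker L, v ≠ 0
    · obtain ⟨⟨⟨v, hv⟩, hv'⟩, hv0⟩ := hb
      apply finrank_le_one (⟨⟨v, hv⟩, hv'⟩ : LinearMap.ker L)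
      rintro ⟨⟨w, hw⟩, hw'⟩
      obtain ⟨c, hc⟩ := ker_pair hd hf hf0 v w hv hw
        (by rintro rfl; exact hv0 rfl) hv' hw'
      exact ⟨c, Subtype.ext (Subtype.ext hc)⟩
    · push Not at hb
      apply finrank_le_one (0 : LinearMap.ker L)
      intro w
      exact ⟨0, by rw [hb w]; simp⟩
  have h3 : LinearMap.range L ≤ BB f (n + (d - 2)) := by
    rintro _ ⟨⟨g, hg⟩, rfl⟩
    exact ⟨⟨g, rfl⟩, Dmap_hom hd hf n g hg⟩
  have := Submodule.finrank_mono h3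
  omega

lemma finrank_AB {f : P2} {d : ℕ} (hd : 1 < d) (hf : f.IsHomogeneous d) (hf0 : f ≠ 0) (n : ℕ) :
    Module.finrank ℂ (AA f n) ≤ Module.finrank ℂ (BB f n) + d := by
  have h1 := finrank_AA f n
  rcases lt_or_ge n (d - 2) with hn | hn
  · omega
  · obtain ⟨k, rfl⟩ : ∃ k, n = k + (d - 2) := ⟨n - (d - 2), by omega⟩
    have := finrank_BB hd hf hf0 k
    omega

lemma finrank_mulmap (f : P2) (hf0 : f ≠ 0) (W : Submodule ℂ P2) :
    Module.finrank ℂ (W.map (LinearMap.mulLeft ℂ f)) = Module.finrank ℂ W :=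
  (LinearEquiv.finrank_eq (Submodule.equivMapOfInjective (LinearMap.mulLeft ℂ f)
    (mul_right_injective₀ hf0) W)).symm

lemma step {f : P2} {d : ℕ} (hd : 1 < d) (hf : f.IsHomogeneous d) (hf0 : f ≠ 0) (n : ℕ) :
    (AA f n).map (LinearMap.mulLeft ℂ f) ⊔ BB f (n + d) ≤ AA f (n + d) ∧
    Module.finrank ℂ ↥((AA f n).map (LinearMap.mulLeft ℂ f) ⊔ BB f (n + d)) +
      Module.finrank ℂ (BB f n) = Module.finrank ℂ (AA f n) + Module.finrank ℂ (BB f (n + d)) := by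
  constructor
  · refine sup_le ?_ (BB_le_AA _ _)
    rintro _ ⟨h, hh, rfl⟩
    exact ⟨mulLeft_mem_Jsub f _ hh.1, mul_hom hf n h hh.2⟩
  · have e : (AA f n).map (LinearMap.mulLeft ℂ f) ⊓ BB f (n + d) =
        (BB f n).map (LinearMap.mulLeft ℂ f) := by
      apply le_antisymm
      · rintro _ ⟨⟨h, hh, rfl⟩, h2⟩
        exact ⟨h, ⟨torsion_zero hd hf hf0 h hh.1 h2.1, hh.2⟩, rfl⟩
      · rintro _ ⟨h, hh, rfl⟩
        exact ⟨⟨h, BB_le_AA _ _ hh, rfl⟩, mul_mem_Dsub _ _ hh.1, mul_hom hf n h hh.2⟩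
    have := Submodule.finrank_sup_add_finrank_inf_eq ((AA f n).map (LinearMap.mulLeft ℂ f))
      (BB f (n + d))
    rw [e, finrank_mulmap f hf0, finrank_mulmap f hf0] at this
    exact this

/-- A sequence with `c n ≤ c (n + d)` and bounded is eventually `d`-periodic. -/
lemma stabilize (c : ℕ → ℕ) (d : ℕ) (h1 : ∀ n, c n ≤ c (n + d)) (h2 : ∀ n, c n ≤ d) :
    ∃ M, ∀ n, M ≤ n → c (n + d) = c n := by
  let s : ℕ → ℕ := fun n => ∑ i ∈ Finset.range d, c (n + i)
  have hs : ∀ n, s (n + 1) + c n = s n + c (n + d) := by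
    intro n
    have a := Finset.sum_range_succ (fun i => c (n + i)) d
    have b := Finset.sum_range_succ' (fun i => c (n + i)) d
    simp only [s]
    have e : ∀ i, n + 1 + i = n + (i + 1) := by intro i; omega
    simp only [e]
    simp only [add_zero] at b
    omega
  have hb : ∀ n, s n ≤ d * d := by
    intro n
    calc s n ≤ ∑ i ∈ Finset.range d, d := Finset.sum_le_sum fun i _ => h2 _
      _ = d * d := by simp
  have hm : Monotone s := monotone_nat_of_le_succ fun n => by
    have := hs n; have := h1 n; omega
  have hfin : (Set.range s).Finite :=
    (Set.finite_Iic (d * d)).subset (by rintro _ ⟨n, rfl⟩; exact hb n)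
  obtain ⟨_, ⟨M, rfl⟩, hM⟩ := hfin.exists_maximal (Set.range_nonempty s)
  refine ⟨M, fun n hn => ?_⟩
  have a := hM ⟨n, rfl⟩ (hm hn)
  have b := hM ⟨n + 1, rfl⟩ (hm (by omega))
  have a' := hm hn
  have b' := hm (show M ≤ n + 1 by omega)
  have := hs n
  omega

lemma exists_gen {f : P2} {d : ℕ} (hd : 1 < d) (hf : f.IsHomogeneous d) (hf0 : f ≠ 0) :
    ∃ M, ∀ n, M ≤ n → AA f (n + d) ≤ (AA f n).map (LinearMap.mulLeft ℂ f) ⊔ BB f (n + d) := by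
  have hle : ∀ n, Module.finrank ℂ (BB f n) ≤ Module.finrank ℂ (AA f n) := fun n =>
    Submodule.finrank_mono (BB_le_AA f n)
  obtain ⟨M, hM⟩ := stabilize
    (fun n => Module.finrank ℂ (AA f n) - Module.finrank ℂ (BB f n)) d (by
      intro n
      have h1 := (step hd hf hf0 n).2
      have h2 := Submodule.finrank_mono (step hd hf hf0 n).1
      have := hle n
      have := hle (n + d)
      show _ - _ ≤ _ - _
      omega) (by
      intro n
      have := finrank_AB hd hf hf0 n
      show _ - _ ≤ _
      omega)
  refine ⟨M, fun n hn => ?_⟩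
  have h1 := (step hd hf hf0 n).2
  have h2 := hM n hn
  have := hle n
  have := hle (n + d)
  refine (Submodule.eq_of_le_of_finrank_eq (step hd hf hf0 n).1 ?_).ge
  omega

/-- The projection from `J_f` to `C(f)`. -/
noncomputable def prj (f : P2) : Jsub f →ₗ[ℂ] Module.AEval' (Cmul f) :=
  (Module.AEval'.of (Cmul f)).toLinearMap ∘ₗ ((Dsub f).comap (Jsub f).subtype).mkQ

lemma prj_surj (f : P2) : Function.Surjective (prj f) :=
  (Module.AEval'.of (Cmul f)).surjective.comp (Submodule.mkQ_surjective _)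

lemma prj_eq_zero (f : P2) (h : Jsub f) : prj f h = 0 ↔ h.1 ∈ Dsub f := by
  unfold prj
  rw [LinearMap.comp_apply, LinearEquiv.coe_coe, LinearEquiv.map_eq_zero_iff,
    Submodule.mkQ_apply, Submodule.Quotient.mk_eq_zero]
  rfl

lemma X_smul_prj (f : P2) (h : Jsub f) :
    (Polynomial.X : Polynomial ℂ) • prj f h = prj f (Jmul f h) := by
  unfold prj
  rw [LinearMap.comp_apply, LinearEquiv.coe_coe, Module.AEval'.X_smul_of]
  rfl

lemma root_inj {f : P2} {d : ℕ} (hd : 1 < d) (hf : f.IsHomogeneous d) (hf0 : f ≠ 0) (c : ℂ)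
    (m : Module.AEval' (Cmul f)) (hm : (Polynomial.X - Polynomial.C c) • m = 0) : m = 0 := by
  obtain ⟨h, rfl⟩ := prj_surj f m
  rw [sub_smul, X_smul_prj, Module.AEval.C_smul, ← map_smul, ← map_sub, prj_eq_zero] at hm
  rw [prj_eq_zero]
  exact torsion hd hf hf0 c h.1 h.2 hm

lemma poly_inj {f : P2} {d : ℕ} (hd : 1 < d) (hf : f.IsHomogeneous d) (hf0 : f ≠ 0) (n : ℕ) :
    ∀ (p : Polynomial ℂ), p.natDegree = n → p ≠ 0 →
    ∀ (m : Module.AEval' (Cmul f)), p • m = 0 → m = 0 := by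
  induction n with
  | zero =>
    intro p hp hp0 m hm
    rw [Polynomial.eq_C_of_natDegree_eq_zero hp] at hm hp0
    rw [Module.AEval.C_smul] at hm
    exact (smul_eq_zero.mp hm).resolve_left (by rintro h; simp [h] at hp0)
  | succ n ih =>
    intro p hp hp0 m hm
    obtain ⟨c, hc⟩ := IsAlgClosed.exists_root p (by
      rw [Polynomial.degree_eq_natDegree hp0, hp]
      exact_mod_cast Nat.succ_ne_zero n)
    obtain ⟨q, rfl⟩ := Polynomial.dvd_iff_isRoot.mpr hc
    have hq0 : q ≠ 0 := right_ne_zero_of_mul hp0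
    rw [Polynomial.natDegree_mul (Polynomial.X_sub_C_ne_zero c) hq0,
      Polynomial.natDegree_X_sub_C] at hp
    rw [mul_smul] at hm
    exact ih q (by omega) hq0 m (root_inj hd hf hf0 c _ hm)

lemma finite_C {f : P2} {d : ℕ} (hd : 1 < d) (hf : f.IsHomogeneous d) (hf0 : f ≠ 0) :
    Module.Finite (Polynomial ℂ) (Module.AEval' (Cmul f)) := by
  obtain ⟨M, hM⟩ := exists_gen hd hf hf0
  let Wn : ℕ → Submodule ℂ (Module.AEval' (Cmul f)) := fun n =>
    ((AA f n).comap (Jsub f).subtype).map (prj f)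
  have hfgn : ∀ n, (Wn n).FG := by
    intro n
    apply Submodule.FG.map
    have : FiniteDimensional ℂ ((AA f n).comap (Jsub f).subtype) :=
      LinearEquiv.finiteDimensional
        (Submodule.comapSubtypeEquivOfLe (inf_le_left : AA f n ≤ Jsub f)).symm
    exact Module.Finite.iff_fg.mp this
  let W : Submodule ℂ (Module.AEval' (Cmul f)) := ⨆ n ∈ Finset.range (M + d), Wn n
  have hW : W.FG := Submodule.fg_biSup _ _ fun n _ => hfgn n
  obtain ⟨s, hs⟩ := hW
  set T := Submodule.span (Polynomial ℂ) (s : Set (Module.AEval' (Cmul f))) with hT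
  have hWT : ∀ m ∈ W, m ∈ T := by
    intro m hm
    rw [← hs] at hm
    exact Submodule.span_le_restrictScalars ℂ (Polynomial ℂ) _ hm
  have key : ∀ n, ∀ h : Jsub f, h.1.IsHomogeneous n → prj f h ∈ T := by
    intro n
    induction n using Nat.strong_induction_on with
    | _ n ih =>
      intro h hh
      rcases lt_or_ge n (M + d) with hn | hn
      · apply hWT
        have : Wn n ≤ W := le_biSup Wn (Finset.mem_range.mpr hn)
        exact this ⟨h, ⟨h.2, hh⟩, rfl⟩
      · obtain ⟨k, rfl⟩ : ∃ k, n = k + d := ⟨n - d, by omega⟩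
        have h1 : h.1 ∈ AA f (k + d) := ⟨h.2, hh⟩
        obtain ⟨_, ⟨a, ha, rfl⟩, b, hb, hab⟩ := Submodule.mem_sup.mp (hM k (by omega) h1)
        have hbJ : b ∈ Jsub f := Dsub_le_Jsub f hb.1
        have e : h = Jmul f ⟨a, ha.1⟩ + ⟨b, hbJ⟩ := Subtype.ext hab.symm
        rw [e, map_add, (prj_eq_zero f ⟨b, hbJ⟩).mpr hb.1, add_zero, ← X_smul_prj]
        exact T.smul_mem _ (ih k (by omega) ⟨a, ha.1⟩ ha.2)
  refine ⟨⟨s, ?_⟩⟩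
  rw [← hT, eq_top_iff]
  intro m _
  obtain ⟨h, rfl⟩ := prj_surj f m
  have : h.1 ∈ ((T.restrictScalars ℂ).comap (prj f)).map (Jsub f).subtype := by
    apply mem_of_comp
    intro n
    have hJ := comp_mem_Jsub hf h.1 h.2 n
    exact ⟨⟨_, hJ⟩, key n ⟨_, hJ⟩ (homogeneousComponent_isHomogeneous n h.1), rfl⟩
  obtain ⟨h', hh', e⟩ := this
  have : h' = h := Subtype.ext e
  rw [← this]
  exact hh'

end S8

/-- For `f ∈ ℂ[x,y]` primitive homogeneous of degree `d > 1`,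
`C(f) = J_f/D_f`, as a `ℂ[t]`-module with `t` acting by multiplication by `f`,
is a free `ℂ[t]`-module of finite rank. -/
theorem statement8 (f : MvPolynomial (Fin 2) ℂ) (d : ℕ) (hd : 1 < d)
    (hf : f.IsHomogeneous d)
    (hprim : ¬ ∃ (g : MvPolynomial (Fin 2) ℂ) (r : ℕ), 1 < r ∧ f = g ^ r) :
    Module.Free (Polynomial ℂ) (Module.AEval' (Cmul f)) ∧
      Module.Finite (Polynomial ℂ) (Module.AEval' (Cmul f)) := by
  have hf0 : f ≠ 0 := by
    rintro rfl
    exact hprim ⟨0, 2, by norm_num, by simp⟩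
  have hfin := S8.finite_C hd hf hf0
  refine ⟨?_, hfin⟩
  have : Module.IsTorsionFree (Polynomial ℂ) (Module.AEval' (Cmul f)) := by
    apply Module.IsTorsionFree.of_smul_eq_zero
    intro p m hm
    by_cases hp : p = 0
    · exact Or.inl hp
    · exact Or.inr (S8.poly_inj hd hf hf0 _ p rfl hp m hm)
  exact Module.free_of_finite_type_torsion_free'
end

section
/- Let f ∈ ℂ[x,y,z] be a homogeneous polynomial of degree d > 1. Then the following are equivalent: (i) for every g ∈ ℂ[x,y,z] and every k ≥ 1, if f^k·g ∈ E_f then g ∈ E_f (i.e. the Brieskorn module B(f) = ℂ[x,y,z]/E_f is torsion free over ℂ[t], where t acts by multiplication by f); (ii) the only common zero of f_x, f_y, f_z in ℂ³ is the origin (i.e. f has an isolated singularity at 0). -/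
open MvPolynomial

/-- Membership in `E_f = {f_x(∂R/∂y − ∂Q/∂z) + f_y(∂P/∂z − ∂R/∂x) + f_z(∂Q/∂x − ∂P/∂y)}`. -/
def Emem (f w : MvPolynomial (Fin 3) ℂ) : Prop :=
  ∃ P Q R : MvPolynomial (Fin 3) ℂ,
    w = pderiv 0 f * (pderiv 1 R - pderiv 2 Q) +
        pderiv 1 f * (pderiv 2 P - pderiv 0 R) +
        pderiv 2 f * (pderiv 0 Q - pderiv 1 P)

lemma pd_comm (i j : Fin 3) (p : MvPolynomial (Fin 3) ℂ) :
    pderiv i (pderiv j p) = pderiv j (pderiv i p) := by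
  have h : ⁅(pderiv i : Derivation ℂ (MvPolynomial (Fin 3) ℂ) (MvPolynomial (Fin 3) ℂ)),
      (pderiv j : Derivation ℂ (MvPolynomial (Fin 3) ℂ) (MvPolynomial (Fin 3) ℂ))⁆ = 0 := by
    apply MvPolynomial.derivation_ext
    intro k
    simp only [Derivation.commutator_apply, pderiv_X, Derivation.zero_apply]
    rw [Pi.single_apply, Pi.single_apply]
    split_ifs <;> simp
  have h2 := congrArg (fun D => D p) h
  simp only [Derivation.commutator_apply, Derivation.zero_apply] at h2
  exact sub_eq_zero.mp h2

/-- Euler operator. -/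
noncomputable def eul (p : MvPolynomial (Fin 3) ℂ) : MvPolynomial (Fin 3) ℂ :=
  X 0 * pderiv 0 p + X 1 * pderiv 1 p + X 2 * pderiv 2 p

lemma eul_add (p q : MvPolynomial (Fin 3) ℂ) : eul (p + q) = eul p + eul q := by
  simp only [eul, map_add]; ring

lemma eul_monomial (u : Fin 3 →₀ ℕ) (a : ℂ) :
    eul (monomial u a) = monomial u (((u 0 + u 1 + u 2 : ℕ) : ℂ) * a) := by
  simp only [eul, X_mul_pderiv_monomial]
  rw [← add_smul, ← add_smul, ← map_nsmul, nsmul_eq_mul]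

lemma coeff_eul (p : MvPolynomial (Fin 3) ℂ) (u : Fin 3 →₀ ℕ) :
    coeff u (eul p) = ((u 0 + u 1 + u 2 : ℕ) : ℂ) * coeff u p := by
  induction p using MvPolynomial.induction_on' with
  | monomial v a =>
    rw [eul_monomial, coeff_monomial, coeff_monomial]
    split_ifs with h
    · rw [h]
    · simp
  | add p q hp hq => rw [eul_add, coeff_add, coeff_add, hp, hq]; ring

lemma eul_inj (c : ℕ) (hc : 0 < c) (p : MvPolynomial (Fin 3) ℂ)
    (h : eul p + (c : MvPolynomial (Fin 3) ℂ) * p = 0) : p = 0 := by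
  ext u
  have h1 := congrArg (coeff u) h
  rw [coeff_add, coeff_eul, ← map_natCast (C : ℂ →+* MvPolynomial (Fin 3) ℂ) c, coeff_C_mul,
    ← add_mul, coeff_zero] at h1
  rw [coeff_zero]
  rcases mul_eq_zero.mp h1 with h2 | h2
  · exfalso
    have h3 : (((u 0 + u 1 + u 2) + c : ℕ) : ℂ) = 0 := by rw [Nat.cast_add]; exact h2
    have := Nat.cast_eq_zero.mp h3
    omega
  · exact h2

lemma eul_surj (c : ℕ) (hc : 0 < c) (p : MvPolynomial (Fin 3) ℂ) :
    ∃ q, eul q + (c : MvPolynomial (Fin 3) ℂ) * q = p := by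
  induction p using MvPolynomial.induction_on' with
  | monomial v a =>
    refine ⟨monomial v (a / ((v 0 + v 1 + v 2 + c : ℕ) : ℂ)), ?_⟩
    rw [eul_monomial, ← map_natCast (C : ℂ →+* MvPolynomial (Fin 3) ℂ) c, C_mul_monomial,
      ← map_add, ← add_mul, ← Nat.cast_add]
    congr 1
    have : ((v 0 + v 1 + v 2 + c : ℕ) : ℂ) ≠ 0 := by
      rw [Nat.cast_ne_zero]; omega
    field_simp
  | add p q hp hq =>
    obtain ⟨a, ha⟩ := hp
    obtain ⟨b, hb⟩ := hq
    refine ⟨a + b, ?_⟩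
    rw [eul_add, ← ha, ← hb]; ring

lemma pd_eul (i : Fin 3) (p : MvPolynomial (Fin 3) ℂ) :
    pderiv i (eul p) = eul (pderiv i p) + pderiv i p := by
  unfold eul
  simp only [map_add, Derivation.leibniz, smul_eq_mul, pderiv_X]
  rw [pd_comm i 0, pd_comm i 1, pd_comm i 2]
  fin_cases i <;> simp <;> ring

lemma eul_mul (p q : MvPolynomial (Fin 3) ℂ) : eul (p * q) = p * eul q + q * eul p := by
  simp only [eul, Derivation.leibniz, smul_eq_mul]; ring

lemma eul_sub (p q : MvPolynomial (Fin 3) ℂ) : eul (p - q) = eul p - eul q := by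
  simp only [eul, map_sub]; ring

lemma eul_hom {f : MvPolynomial (Fin 3) ℂ} {d : ℕ} (hf : f.IsHomogeneous d) :
    eul f = (d : MvPolynomial (Fin 3) ℂ) * f := by
  have := hf.sum_X_mul_pderiv
  rw [Fin.sum_univ_three, nsmul_eq_mul] at this
  exact this

lemma eul_pd {f : MvPolynomial (Fin 3) ℂ} {d : ℕ} (hf : f.IsHomogeneous d) (i : Fin 3) :
    eul (pderiv i f) = ((d : MvPolynomial (Fin 3) ℂ) - 1) * pderiv i f := by
  have h := pd_eul i f
  rw [eul_hom hf, Derivation.leibniz] at h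
  simp only [smul_eq_mul, Derivation.map_natCast] at h
  linear_combination -h

/-- If `v` is a syzygy of the gradient, `d f div v` lies in `E_f`. -/
lemma syz_torsion {f : MvPolynomial (Fin 3) ℂ} {d : ℕ} (hd : 1 < d) (hf : f.IsHomogeneous d)
    (a b c : MvPolynomial (Fin 3) ℂ)
    (h : a * pderiv 0 f + b * pderiv 1 f + c * pderiv 2 f = 0) :
    Emem f (f ^ 1 * (pderiv 0 a + pderiv 1 b + pderiv 2 c)) := by
  have hC : (C ((d : ℂ)⁻¹) : MvPolynomial (Fin 3) ℂ) * (d : MvPolynomial (Fin 3) ℂ) = 1 := by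
    rw [← map_natCast (C : ℂ →+* MvPolynomial (Fin 3) ℂ) d, ← C_mul, inv_mul_cancel₀, C_1]
    rw [Nat.cast_ne_zero]; omega
  set e : MvPolynomial (Fin 3) ℂ := C ((d : ℂ)⁻¹) with he
  have e0 : ∀ i, pderiv i e = 0 := fun i => pderiv_C
  refine ⟨-e * (b * X 2 - c * X 1), -e * (c * X 0 - a * X 2), -e * (a * X 1 - b * X 0), ?_⟩
  have h0 := eul_pd hf 0
  have h1 := eul_pd hf 1
  have h2 := eul_pd hf 2
  have hE := eul_hom hf
  have hN := congrArg eul h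
  simp only [eul_add, eul_mul] at hN
  rw [h0, h1, h2] at hN
  simp only [eul, map_zero] at hN hE
  simp only [map_sub, map_neg, Derivation.leibniz, smul_eq_mul, e0]
  simp [pderiv_X]
  linear_combination e * hN + e * (3 - (d : MvPolynomial (Fin 3) ℂ)) * h
    - e * (pderiv 0 a + pderiv 1 b + pderiv 2 c) * hE
    - f * (pderiv 0 a + pderiv 1 b + pderiv 2 c) * hC


lemma torsion_step {f : MvPolynomial (Fin 3) ℂ} {d : ℕ} (hf : f.IsHomogeneous d)
    (K : ∀ a b c : MvPolynomial (Fin 3) ℂ,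
      a * pderiv 0 f + b * pderiv 1 f + c * pderiv 2 f = 0 →
      ∃ p q r, a = pderiv 1 f * r - pderiv 2 f * q ∧ b = pderiv 2 f * p - pderiv 0 f * r ∧
        c = pderiv 0 f * q - pderiv 1 f * p)
    (g : MvPolynomial (Fin 3) ℂ) (hg : Emem f (f * g)) : Emem f g := by
  obtain ⟨P, Q, R, h⟩ := hg
  have hE := eul_hom hf
  have hE' := hE
  simp only [eul] at hE'
  obtain ⟨p, q, r, h0, h1, h2⟩ := K
    (g * X 0 - (d : MvPolynomial (Fin 3) ℂ) * (pderiv 1 R - pderiv 2 Q))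
    (g * X 1 - (d : MvPolynomial (Fin 3) ℂ) * (pderiv 2 P - pderiv 0 R))
    (g * X 2 - (d : MvPolynomial (Fin 3) ℂ) * (pderiv 0 Q - pderiv 1 P))
    (by linear_combination g * hE' + (d : MvPolynomial (Fin 3) ℂ) * h)
  have k0 := congrArg (pderiv 0) h0
  have k1 := congrArg (pderiv 1) h1
  have k2 := congrArg (pderiv 2) h2
  simp only [map_sub, Derivation.leibniz, smul_eq_mul, Derivation.map_natCast, pderiv_X_self]
    at k0 k1 k2
  rw [pd_comm 0 1, pd_comm 0 2, pd_comm 0 1, pd_comm 0 2] at k0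
  rw [pd_comm 1 2, pd_comm 1 2] at k1
  have key : eul g + ((3 : ℕ) : MvPolynomial (Fin 3) ℂ) * g =
      - (pderiv 0 f * (pderiv 1 r - pderiv 2 q) + pderiv 1 f * (pderiv 2 p - pderiv 0 r) +
        pderiv 2 f * (pderiv 0 q - pderiv 1 p)) := by
    simp only [eul]
    push_cast
    linear_combination k0 + k1 + k2
  obtain ⟨P', hP⟩ := eul_surj (d + 1) (by omega) (-p)
  obtain ⟨Q', hQ⟩ := eul_surj (d + 1) (by omega) (-q)
  obtain ⟨R', hR⟩ := eul_surj (d + 1) (by omega) (-r)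
  refine ⟨P', Q', R', ?_⟩
  rw [← sub_eq_zero]
  apply eul_inj 3 (by norm_num)
  have hP1 := congrArg (pderiv 1) hP
  have hP2 := congrArg (pderiv 2) hP
  have hQ0 := congrArg (pderiv 0) hQ
  have hQ2 := congrArg (pderiv 2) hQ
  have hR0 := congrArg (pderiv 0) hR
  have hR1 := congrArg (pderiv 1) hR
  simp only [map_add, Derivation.leibniz, smul_eq_mul, Derivation.map_natCast, pd_eul, map_neg]
    at hP1 hP2 hQ0 hQ2 hR0 hR1
  push_cast at hP1 hP2 hQ0 hQ2 hR0 hR1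
  simp only [eul_sub, eul_add, eul_mul, eul_pd hf]
  push_cast at key ⊢
  linear_combination key - pderiv 0 f * (hR1 - hQ2) - pderiv 1 f * (hP2 - hR0)
    - pderiv 2 f * (hQ0 - hP1)


lemma koszul_exact {S : Type*} [CommRing S] [IsDomain S] (f0 f1 f2 a1 a2 a3 : S) (ha1 : a1 ≠ 0)
    (H2 : ∀ u w, a2 * u = a1 * w → ∃ v, u = a1 * v)
    (H3 : ∀ h u v, a3 * h = a1 * u + a2 * v → ∃ u' v', h = a1 * u' + a2 * v')
    (s0 s1 s2 t0 t1 t2 w0 w1 w2 : S)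
    (hs : a1 = s0 * f0 + s1 * f1 + s2 * f2) (ht : a2 = t0 * f0 + t1 * f1 + t2 * f2)
    (hw : a3 = w0 * f0 + w1 * f1 + w2 * f2)
    (a b c : S) (h : a * f0 + b * f1 + c * f2 = 0) :
    ∃ p q r, a = f1 * r - f2 * q ∧ b = f2 * p - f0 * r ∧ c = f0 * q - f1 * p := by
  obtain ⟨p, hp⟩ : ∃ p, p = b * s2 - c * s1 := ⟨_, rfl⟩
  obtain ⟨q, hq⟩ : ∃ q, q = c * s0 - a * s2 := ⟨_, rfl⟩
  obtain ⟨r, hr⟩ : ∃ r, r = a * s1 - b * s0 := ⟨_, rfl⟩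
  have A0 : a1 * a = f1 * r - f2 * q := by rw [hs, hq, hr]; linear_combination s0 * h
  have A1 : a1 * b = f2 * p - f0 * r := by rw [hs, hp, hr]; linear_combination s1 * h
  have A2 : a1 * c = f0 * q - f1 * p := by rw [hs, hq, hp]; linear_combination s2 * h
  obtain ⟨k, hk⟩ : ∃ k, k = t0 * p + t1 * q + t2 * r := ⟨_, rfl⟩
  have B0 : a2 * p = f0 * k - a1 * (t1 * c - t2 * b) := by
    rw [hk, ht]; linear_combination t1 * A2 - t2 * A1
  have B1 : a2 * q = f1 * k - a1 * (t2 * a - t0 * c) := by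
    rw [hk, ht]; linear_combination t2 * A0 - t0 * A2
  have B2 : a2 * r = f2 * k - a1 * (t0 * b - t1 * a) := by
    rw [hk, ht]; linear_combination t0 * A1 - t1 * A0
  obtain ⟨u, v, huv⟩ := H3 k (w0 * (t1 * c - t2 * b) + w1 * (t2 * a - t0 * c)
    + w2 * (t0 * b - t1 * a)) (w0 * p + w1 * q + w2 * r) (by
      rw [hw]; linear_combination -w0 * B0 - w1 * B1 - w2 * B2)
  obtain ⟨g0, hg0⟩ := H2 (p - v * f0) (u * f0 - (t1 * c - t2 * b)) (by
    rw [huv] at B0; linear_combination B0)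
  obtain ⟨g1, hg1⟩ := H2 (q - v * f1) (u * f1 - (t2 * a - t0 * c)) (by
    rw [huv] at B1; linear_combination B1)
  obtain ⟨g2, hg2⟩ := H2 (r - v * f2) (u * f2 - (t0 * b - t1 * a)) (by
    rw [huv] at B2; linear_combination B2)
  refine ⟨g0, g1, g2, mul_left_cancel₀ ha1 ?_, mul_left_cancel₀ ha1 ?_, mul_left_cancel₀ ha1 ?_⟩
  · linear_combination A0 + f1 * hg2 - f2 * hg1
  · linear_combination A1 + f2 * hg0 - f0 * hg2
  · linear_combination A2 + f0 * hg1 - f1 * hg0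

lemma mono_cancel {s : Set (Fin 3 →₀ ℕ)} {k : Fin 3} {N : ℕ} (hs : ∀ m ∈ s, m k = 0)
    (h : MvPolynomial (Fin 3) ℂ)
    (hh : X k ^ N * h ∈ Ideal.span ((fun m => monomial m (1 : ℂ)) '' s)) :
    h ∈ Ideal.span ((fun m => monomial m (1 : ℂ)) '' s) := by
  rw [mem_ideal_span_monomial_image] at hh ⊢
  intro m hm
  have h1 : Finsupp.single k N + m ∈ (X k ^ N * h).support := by
    rw [mem_support_iff, X_pow_eq_monomial, coeff_monomial_mul, one_mul]
    exact mem_support_iff.mp hm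
  obtain ⟨t, ht, hle⟩ := hh _ h1
  refine ⟨t, ht, fun i => ?_⟩
  have := hle i
  rw [Finsupp.add_apply, Finsupp.single_apply] at this
  split_ifs at this with hi
  · rw [← hi, hs t ht]; exact Nat.zero_le _
  · simpa using this

lemma koszul_of_isolated {f : MvPolynomial (Fin 3) ℂ}
    (hiso : ∀ p : Fin 3 → ℂ,
        eval p (pderiv 0 f) = 0 → eval p (pderiv 1 f) = 0 → eval p (pderiv 2 f) = 0 → p = 0)
    (a b c : MvPolynomial (Fin 3) ℂ)
    (h : a * pderiv 0 f + b * pderiv 1 f + c * pderiv 2 f = 0) :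
    ∃ p q r, a = pderiv 1 f * r - pderiv 2 f * q ∧ b = pderiv 2 f * p - pderiv 0 f * r ∧
        c = pderiv 0 f * q - pderiv 1 f * p := by
  set J : Ideal (MvPolynomial (Fin 3) ℂ) := Ideal.span {pderiv 0 f, pderiv 1 f, pderiv 2 f} with hJ
  have hX : ∀ i, (X i : MvPolynomial (Fin 3) ℂ) ∈ J.radical := by
    intro i
    rw [← vanishingIdeal_zeroLocus_eq_radical (K := ℂ) J, mem_vanishingIdeal_iff]
    intro p hp
    rw [mem_zeroLocus_iff] at hp
    have hz : p = 0 := by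
      apply hiso
      · simpa using hp _ (Ideal.subset_span (by simp))
      · simpa using hp _ (Ideal.subset_span (by simp))
      · simpa using hp _ (Ideal.subset_span (by simp))
    simp [hz]
  have hex : ∀ i, ∃ n, ∃ s0 s1 s2 : MvPolynomial (Fin 3) ℂ,
      X i ^ n = s0 * pderiv 0 f + s1 * pderiv 1 f + s2 * pderiv 2 f := by
    intro i
    obtain ⟨n, hn⟩ := hX i
    refine ⟨n, ?_⟩
    rw [hJ, Ideal.mem_span_insert] at hn
    obtain ⟨s0, z, hz, h1⟩ := hn
    rw [Ideal.mem_span_pair] at hz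
    obtain ⟨s1, s2, h2⟩ := hz
    exact ⟨s0, s1, s2, by rw [h1, ← h2]; ring⟩
  obtain ⟨n, s0, s1, s2, hs⟩ := hex 0
  obtain ⟨m, t0, t1, t2, ht⟩ := hex 1
  obtain ⟨l, w0, w1, w2, hw⟩ := hex 2
  refine koszul_exact _ _ _ (X 0 ^ n) (X 1 ^ m) (X 2 ^ l) (pow_ne_zero _ (X_ne_zero _)) ?_ ?_
    s0 s1 s2 t0 t1 t2 w0 w1 w2 hs ht hw a b c h
  · intro u w huw
    have h1 := mono_cancel (s := {Finsupp.single 0 n}) (k := 1) (N := m) (by simp) u (by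
      rw [huw, Set.image_singleton, ← X_pow_eq_monomial]
      exact Ideal.mul_mem_right _ _ (Ideal.subset_span rfl))
    rw [Set.image_singleton, ← X_pow_eq_monomial, Ideal.mem_span_singleton] at h1
    exact h1
  · intro k u v huv
    have h1 := mono_cancel (s := {Finsupp.single 0 n, Finsupp.single 1 m}) (k := 2) (N := l)
      (by simp) k (by
      rw [huv, Set.image_pair, ← X_pow_eq_monomial, ← X_pow_eq_monomial]
      exact Ideal.add_mem _ (Ideal.mul_mem_right _ _ (Ideal.subset_span (by simp)))
        (Ideal.mul_mem_right _ _ (Ideal.subset_span (by simp))))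
    rw [Set.image_pair, ← X_pow_eq_monomial, ← X_pow_eq_monomial, Ideal.mem_span_pair] at h1
    obtain ⟨p, q, hpq⟩ := h1
    exact ⟨p, q, by rw [← hpq]; ring⟩

lemma iso_imp_tf {f : MvPolynomial (Fin 3) ℂ} {d : ℕ} (hf : f.IsHomogeneous d)
    (hiso : ∀ p : Fin 3 → ℂ,
        eval p (pderiv 0 f) = 0 → eval p (pderiv 1 f) = 0 → eval p (pderiv 2 f) = 0 → p = 0)
    (g : MvPolynomial (Fin 3) ℂ) (k : ℕ) (hg : Emem f (f ^ k * g)) : Emem f g := by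
  induction k with
  | zero => simpa using hg
  | succ k ih =>
    apply ih
    apply torsion_step hf (koszul_of_isolated hiso)
    rwa [pow_succ', mul_assoc] at hg

lemma syz_mem {f : MvPolynomial (Fin 3) ℂ} {d : ℕ} (hd : 1 < d) (hf : f.IsHomogeneous d)
    (htf : ∀ (g : MvPolynomial (Fin 3) ℂ) (k : ℕ), 1 ≤ k → Emem f (f ^ k * g) → Emem f g)
    (J : Ideal (MvPolynomial (Fin 3) ℂ)) (h0 : pderiv 0 f ∈ J) (h1 : pderiv 1 f ∈ J)
    (h2 : pderiv 2 f ∈ J) (a b c : MvPolynomial (Fin 3) ℂ)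
    (h : a * pderiv 0 f + b * pderiv 1 f + c * pderiv 2 f = 0) : a ∈ J ∧ b ∈ J ∧ c ∈ J := by
  have hdiv : ∀ a b c : MvPolynomial (Fin 3) ℂ,
      a * pderiv 0 f + b * pderiv 1 f + c * pderiv 2 f = 0 →
      pderiv 0 a + pderiv 1 b + pderiv 2 c ∈ J := by
    intro a b c h
    obtain ⟨P, Q, R, hE⟩ := htf _ 1 le_rfl (syz_torsion hd hf a b c h)
    rw [hE]
    exact J.add_mem (J.add_mem (J.mul_mem_right _ h0) (J.mul_mem_right _ h1))
      (J.mul_mem_right _ h2)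
  have hD := hdiv a b c h
  have hm : ∀ i : Fin 3, pderiv 0 (X i * a) + pderiv 1 (X i * b) + pderiv 2 (X i * c) ∈ J :=
    fun i => hdiv _ _ _ (by linear_combination X i * h)
  have hs : ∀ i : Fin 3, pderiv 0 (X i * a) + pderiv 1 (X i * b) + pderiv 2 (X i * c)
      - X i * (pderiv 0 a + pderiv 1 b + pderiv 2 c) ∈ J :=
    fun i => J.sub_mem (hm i) (J.mul_mem_left _ hD)
  refine ⟨?_, ?_, ?_⟩
  · convert hs 0 using 1
    simp [Derivation.leibniz]
    ring
  · convert hs 1 using 1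
    simp [Derivation.leibniz]
    ring
  · convert hs 2 using 1
    simp [Derivation.leibniz]
    ring


lemma height_two {S : Type*} [CommRing S] [IsDomain S] [UniqueFactorizationMonoid S]
    (F0 F1 : S) (h0 : F0 ≠ 0) (hrel : IsRelPrime F0 F1) (Q : Ideal S) [hQ : Q.IsPrime]
    (hF0 : F0 ∈ Q) (hF1 : F1 ∈ Q) : 2 ≤ Q.height := by
  obtain ⟨s, hs, u, hu⟩ := UniqueFactorizationMonoid.exists_prime_factors F0 h0
  have hm : s.prod ∈ Q := by
    have : s.prod * u * (↑u⁻¹ : S) ∈ Q := Q.mul_mem_right _ (by rw [hu]; exact hF0)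
    simpa [mul_assoc] using this
  obtain ⟨π, hπs, hπ⟩ := (hQ.multiset_prod_mem_iff_exists_mem s).1 hm
  have hpr := hs π hπs
  have hdvd : π ∣ F0 := by rw [← hu]; exact (Multiset.dvd_prod hπs).mul_right _
  have hsp : (Ideal.span {π}).IsPrime := (Ideal.span_singleton_prime hpr.ne_zero).2 hpr
  have l1 : (⊥ : Ideal S) < Ideal.span {π} := by
    rw [bot_lt_iff_ne_bot, Ne, Ideal.span_singleton_eq_bot]
    exact hpr.ne_zero
  have l2 : Ideal.span {π} < Q := by
    refine lt_of_le_of_ne ((Ideal.span_singleton_le_iff_mem Q).2 hπ) ?_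
    intro h
    rw [← h, Ideal.mem_span_singleton] at hF1
    exact hpr.not_isUnit (hrel hdvd hF1)
  have k1 := Ideal.height_add_one_le_of_lt_of_isPrime l1
  have k2 := Ideal.height_add_one_le_of_lt_of_isPrime l2
  rw [Ideal.height_bot] at k1
  calc (2 : ℕ∞) = 0 + 1 + 1 := by norm_num
    _ ≤ _ := by gcongr
    _ ≤ _ := k2

lemma core {S : Type*} [CommRing S] [IsDomain S] [UniqueFactorizationMonoid S]
    [IsNoetherianRing S] (F0 F1 F2 l1 l2 : S) (P : Ideal S) [hP : P.IsPrime]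
    (hPl : P = Ideal.span {l1, l2}) (hl1 : l1 ≠ 0)
    (hreg : ∀ a b, l2 * a = l1 * b → l1 ∣ a)
    (m0 : F0 ∈ P) (m1 : F1 ∈ P) (m2 : F2 ∈ P) (h0 : F0 ≠ 0) (hrel : IsRelPrime F0 F1)
    (Hsyz : ∀ a b c, a * F0 + b * F1 + c * F2 = 0 →
      a ∈ Ideal.span {F0, F1, F2} ∧ b ∈ Ideal.span {F0, F1, F2} ∧ c ∈ Ideal.span {F0, F1, F2}) :
    False := by
  have hJP : Ideal.span {F0, F1, F2} ≤ P := by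
    rw [Ideal.span_le]
    rintro x (rfl | rfl | rfl) <;> assumption
  have h1 : F1 ≠ 0 := by
    rintro rfl
    exact hP.ne_top (Ideal.eq_top_of_isUnit_mem _ m0 (hrel dvd_rfl (dvd_zero _)))
  have hJ : ∀ x ∈ Ideal.span {F0, F1, F2}, ∃ u v w, x = u * F0 + v * F1 + w * F2 := by
    intro x hx
    rw [Ideal.mem_span_insert] at hx
    obtain ⟨s0, z, hz, h1⟩ := hx
    rw [Ideal.mem_span_pair] at hz
    obtain ⟨s1, s2, h2⟩ := hz
    exact ⟨s0, s1, s2, by rw [h1, ← h2]; ring⟩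
  set q : Ideal S := Ideal.span {F0, F1} with hq
  set I : Ideal S := Submodule.colon q {F2} with hI
  have hIm : ∀ r, r ∈ I ↔ r * F2 ∈ q := fun r => by
    rw [hI, Submodule.mem_colon_singleton, smul_eq_mul]
  have hIJ : I ≤ Ideal.span {F0, F1, F2} := by
    intro r hr
    rw [hIm, hq, Ideal.mem_span_pair] at hr
    obtain ⟨a, b, hab⟩ := hr
    have := (Hsyz a b (-r) (by linear_combination hab)).2.2
    simpa using this
  have hqI : q ≤ I := fun r hr => (hIm r).2 (q.mul_mem_right _ hr)
  have hPh : P.height ≤ 2 := by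
    have : P ∈ (Ideal.span ({l1, l2} : Set S)).minimalPrimes := by
      rw [← hPl, Ideal.minimalPrimes_eq_subsingleton_self]; rfl
    refine (Ideal.height_le_card_of_mem_minimalPrimes_span (by simp) this).trans ?_
    have h2 : ({l1, l2} : Set S).ncard ≤ 2 :=
      (Set.ncard_insert_le l1 {l2}).trans (by rw [Set.ncard_singleton])
    exact_mod_cast h2
  have hmin : P ∈ I.minimalPrimes := by
    refine ⟨⟨hP, hIJ.trans hJP⟩, ?_⟩
    rintro Q ⟨hQ, hIQ⟩ hQP
    by_contra hne
    have hlt : Q < P := lt_of_le_not_ge hQP hne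
    have k1 := Ideal.height_add_one_le_of_lt_of_isPrime hlt
    have k2 := height_two F0 F1 h0 hrel Q (hIQ (hqI (Ideal.subset_span (by simp))))
      (hIQ (hqI (Ideal.subset_span (by simp))))
    have k3 : (2 : ℕ∞) + 1 ≤ 2 := by
      refine le_trans ?_ (k1.trans hPh)
      gcongr
    exact absurd k3 (by decide)
  obtain ⟨t, ht⟩ : ∃ t : S, P = Submodule.colon I {t} := by
    apply Submodule.exists_eq_colon_of_mem_minimalPrimes (x := (1 : S))
    convert hmin using 2
    ext r
    rw [Submodule.mem_colon_singleton, smul_eq_mul, mul_one]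
  have htm : ∀ r, r ∈ P ↔ r * t * F2 ∈ q := fun r => by
    rw [ht, Submodule.mem_colon_singleton, smul_eq_mul, hIm]
  have hsq : t * F2 ∉ q := by
    intro h
    exact hP.ne_top ((Ideal.eq_top_iff_one _).2 ((htm 1).2 (by rwa [one_mul])))
  have L1 : l1 ∈ P := by rw [hPl]; exact Ideal.subset_span (by simp)
  have L2 : l2 ∈ P := by rw [hPl]; exact Ideal.subset_span (by simp)
  obtain ⟨a0, a1, ha⟩ := Ideal.mem_span_pair.1 ((htm l1).1 L1)
  obtain ⟨b0, b1, hb⟩ := Ideal.mem_span_pair.1 ((htm l2).1 L2)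
  obtain ⟨A0, A1, -⟩ := Hsyz a0 a1 (-l1 * t) (by linear_combination ha)
  obtain ⟨B0, B1, -⟩ := Hsyz b0 b1 (-l2 * t) (by linear_combination hb)
  have hz : (l2 * a0 - l1 * b0) * F0 + (l2 * a1 - l1 * b1) * F1 = 0 := by
    linear_combination l2 * ha - l1 * hb
  obtain ⟨κ, hκ⟩ : F1 ∣ l2 * a0 - l1 * b0 :=
    hrel.symm.dvd_of_dvd_mul_right ⟨-(l2 * a1 - l1 * b1), by linear_combination hz⟩
  have hκ' : l2 * a1 - l1 * b1 = - κ * F0 := by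
    apply mul_right_cancel₀ h1
    linear_combination hz - F0 * hκ
  have hκP : κ ∉ P := by
    intro h
    rw [hPl] at h
    obtain ⟨k1, k2, hk⟩ := Ideal.mem_span_pair.1 h
    obtain ⟨e0, he0⟩ := hreg (a0 - k2 * F1) (b0 + k1 * F1) (by
      linear_combination hκ - F1 * hk)
    obtain ⟨e1, he1⟩ := hreg (a1 + k2 * F0) (b1 - k1 * F0) (by
      linear_combination hκ' + F0 * hk)
    apply hsq
    have : t * F2 = e0 * F0 + e1 * F1 := by
      apply mul_left_cancel₀ hl1
      linear_combination -ha + F0 * he0 + F1 * he1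
    rw [this]
    exact Ideal.mem_span_pair.2 ⟨e0, e1, rfl⟩
  obtain ⟨u0, u1, u2, hu⟩ := hJ _ A0
  obtain ⟨v0, v1, v2, hv⟩ := hJ _ B0
  obtain ⟨w0, w1, w2, hw⟩ := hJ _ A1
  obtain ⟨x0, x1, x2, hx⟩ := hJ _ B1
  have hmem : ∀ u v, l2 * u - l1 * v ∈ P := fun u v =>
    P.sub_mem (P.mul_mem_right _ L2) (P.mul_mem_right _ L1)
  obtain ⟨m10, hm10⟩ : ∃ m, m = l2 * u0 - l1 * v0 := ⟨_, rfl⟩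
  obtain ⟨m11, hm11⟩ : ∃ m, m = l2 * u1 - l1 * v1 := ⟨_, rfl⟩
  obtain ⟨m12, hm12⟩ : ∃ m, m = l2 * u2 - l1 * v2 := ⟨_, rfl⟩
  obtain ⟨m00, hm00⟩ : ∃ m, m = -(l2 * w0 - l1 * x0) := ⟨_, rfl⟩
  obtain ⟨m01, hm01⟩ : ∃ m, m = -(l2 * w1 - l1 * x1) := ⟨_, rfl⟩
  obtain ⟨m02, hm02⟩ : ∃ m, m = -(l2 * w2 - l1 * x2) := ⟨_, rfl⟩
  have M00 : m00 ∈ P := by rw [hm00]; exact P.neg_mem (hmem _ _)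
  have M11 : m11 ∈ P := by rw [hm11]; exact hmem _ _
  have M10 : m10 ∈ P := by rw [hm10]; exact hmem _ _
  have E1 : κ * F1 = m10 * F0 + m11 * F1 + m12 * F2 := by
    rw [hm10, hm11, hm12]; linear_combination -hκ + l2 * hu - l1 * hv
  have E0 : κ * F0 = m00 * F0 + m01 * F1 + m02 * F2 := by
    rw [hm00, hm01, hm02]; linear_combination hκ' - l2 * hw + l1 * hx
  obtain ⟨D, hD⟩ : ∃ D, D = (κ - m00) * (κ - m11) - m01 * m10 := ⟨_, rfl⟩
  have D0 : D * F0 = F2 * ((κ - m11) * m02 + m01 * m12) := by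
    rw [hD]; linear_combination (κ - m11) * E0 + m01 * E1
  have D1 : D * F1 = F2 * ((κ - m00) * m12 + m10 * m02) := by
    rw [hD]; linear_combination (κ - m00) * E1 + m10 * E0
  have hDP : D ∈ P := by
    by_cases hF2 : F2 = 0
    · rw [hF2, zero_mul] at D0
      rw [(mul_eq_zero.1 D0).resolve_right h0]
      exact P.zero_mem
    · have : F0 ∣ (κ - m11) * m02 + m01 * m12 := by
        apply hrel.dvd_of_dvd_mul_right
        refine ⟨(κ - m00) * m12 + m10 * m02, mul_left_cancel₀ hF2 ?_⟩
        linear_combination F0 * D1 - F1 * D0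
      obtain ⟨y, hy⟩ := this
      have : D = F2 * y := by
        apply mul_right_cancel₀ h0
        rw [D0, hy]; ring
      rw [this]
      exact P.mul_mem_right _ m2
  have : κ * κ ∈ P := by
    have e : κ * κ = D + κ * m00 + (κ - m00) * m11 + m01 * m10 := by rw [hD]; ring
    rw [e]
    exact P.add_mem (P.add_mem (P.add_mem hDP (P.mul_mem_left _ M00)) (P.mul_mem_left _ M11))
      (P.mul_mem_left _ M10)
  rcases hP.mem_or_mem this with h | h <;> exact hκP h

lemma core2 (F0 F1 F2 l1 l2 : MvPolynomial (Fin 3) ℂ) (P : Ideal (MvPolynomial (Fin 3) ℂ))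
    [hP : P.IsPrime] (hPl : P = Ideal.span {l1, l2}) (hl1 : l1 ≠ 0)
    (hreg : ∀ a b, l2 * a = l1 * b → l1 ∣ a)
    (m0 : F0 ∈ P) (m1 : F1 ∈ P) (m2 : F2 ∈ P)
    (Hsyz : ∀ (J : Ideal (MvPolynomial (Fin 3) ℂ)), F0 ∈ J → F1 ∈ J → F2 ∈ J →
      ∀ a b c, a * F0 + b * F1 + c * F2 = 0 → a ∈ J ∧ b ∈ J ∧ c ∈ J) :
    False := by
  have h0 : F0 ≠ 0 := by
    rintro rfl
    exact hP.ne_top ((Ideal.eq_top_iff_one _).2 (Hsyz P m0 m1 m2 1 0 0 (by ring)).1)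
  have hnc : ∀ π : MvPolynomial (Fin 3) ℂ, Prime π → π ∣ F0 → π ∣ F1 → π ∣ F2 → False := by
    intro π hπ d0 d1 d2
    have key : ∀ n : ℕ, ∃ a b c, a * F0 + b * F1 + c * F2 = 0 ∧ F0 = π ^ n * b := by
      intro n
      induction n with
      | zero => exact ⟨-F1, F0, 0, by ring, by ring⟩
      | succ n ih =>
        obtain ⟨a, b, c, h, hb⟩ := ih
        obtain ⟨ka, kb, kc⟩ := Hsyz (Ideal.span {π}) (Ideal.mem_span_singleton.2 d0)
          (Ideal.mem_span_singleton.2 d1) (Ideal.mem_span_singleton.2 d2) a b c h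
        rw [Ideal.mem_span_singleton] at ka kb kc
        obtain ⟨a', rfl⟩ := ka
        obtain ⟨b', rfl⟩ := kb
        obtain ⟨c', rfl⟩ := kc
        refine ⟨a', b', c', ?_, ?_⟩
        · apply mul_left_cancel₀ hπ.ne_zero
          linear_combination h
        · rw [pow_succ, mul_assoc]; exact hb
    obtain ⟨n, hn⟩ := FiniteMultiplicity.of_prime_left hπ h0
    obtain ⟨a, b, c, -, hb⟩ := key (n + 1)
    exact hn ⟨b, hb⟩
  obtain ⟨c, hc⟩ : ∃ c : ℂ, IsRelPrime F0 (F1 + C c * F2) := by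
    by_contra hcon
    push Not at hcon
    have hex : ∀ c : ℂ, ∃ q : {q // q ∈ (UniqueFactorizationMonoid.factors F0)},
        q.1 ∣ F1 + C c * F2 := by
      intro c
      have h1 := hcon c
      rw [UniqueFactorizationMonoid.isRelPrime_iff_no_prime_factors h0] at h1
      push Not at h1
      obtain ⟨π, d0, d1, hπ⟩ := h1
      obtain ⟨q, hq, ha⟩ := UniqueFactorizationMonoid.exists_mem_factors_of_dvd h0
        hπ.irreducible d0
      exact ⟨⟨q, hq⟩, ha.symm.dvd.trans d1⟩
    choose φ hφ using hex
    have hfin : Finite {q // q ∈ (UniqueFactorizationMonoid.factors F0)} := by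
      classical
      exact Finite.of_injective
        (fun q => (⟨q.1, Multiset.mem_toFinset.2 q.2⟩ :
          {q // q ∈ (UniqueFactorizationMonoid.factors F0).toFinset}))
        (fun a b h => Subtype.ext (congrArg (fun z => z.1) h))
    obtain ⟨x, y, hxy, he⟩ := Finite.exists_ne_map_eq_of_infinite φ
    have d1 := hφ x
    have d2 := hφ y
    rw [← he] at d2
    have hpr := UniqueFactorizationMonoid.prime_of_factor _ (φ x).2
    have d3 : (φ x).1 ∣ F2 := by
      have h3 : (φ x).1 ∣ C (x - y)⁻¹ * ((F1 + C x * F2) - (F1 + C y * F2)) :=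
        (dvd_sub d1 d2).mul_left _
      have e : C (x - y)⁻¹ * ((F1 + C x * F2) - (F1 + C y * F2)) = F2 := by
        have e1 : (C (x - y)⁻¹ : MvPolynomial (Fin 3) ℂ) * (C x - C y) = 1 := by
          rw [← C_sub, ← C_mul, inv_mul_cancel₀ (sub_ne_zero.2 hxy), C_1]
        linear_combination F2 * e1
      rwa [e] at h3
    have d4 : (φ x).1 ∣ F1 := (dvd_add_left (d3.mul_left (C x))).1 d1
    exact hnc _ hpr (UniqueFactorizationMonoid.dvd_of_mem_factors (φ x).2) d4 d3
  refine core F0 (F1 + C c * F2) F2 l1 l2 P hPl hl1 hreg m0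
    (P.add_mem m1 (P.mul_mem_left _ m2)) m2 h0 hc ?_
  intro a b e h
  set J := Ideal.span {F0, F1 + C c * F2, F2} with hJ
  have j0 : F0 ∈ J := Ideal.subset_span (by simp)
  have j1' : F1 + C c * F2 ∈ J := Ideal.subset_span (by simp)
  have j2 : F2 ∈ J := Ideal.subset_span (by simp)
  have j1 : F1 ∈ J := by
    have := J.sub_mem j1' (J.mul_mem_left (C c) j2)
    simpa using this
  obtain ⟨ka, kb, kc⟩ := Hsyz J j0 j1 j2 a b (e + b * C c) (by linear_combination h)
  refine ⟨ka, kb, ?_⟩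
  have := J.sub_mem kc (J.mul_mem_right (C c) kb)
  simpa using this


lemma sub_mem_of_hom (I : Ideal (MvPolynomial (Fin 3) ℂ))
    (σ : MvPolynomial (Fin 3) ℂ →ₐ[ℂ] MvPolynomial (Fin 3) ℂ)
    (h : ∀ j, X j - σ (X j) ∈ I) (g : MvPolynomial (Fin 3) ℂ) : g - σ g ∈ I := by
  have e : Ideal.Quotient.mkₐ ℂ I = (Ideal.Quotient.mkₐ ℂ I).comp σ := by
    apply MvPolynomial.algHom_ext
    intro j
    exact (Ideal.Quotient.mk_eq_mk_iff_sub_mem _ _).2 (h j)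
  exact (Ideal.Quotient.mk_eq_mk_iff_sub_mem _ _).1 (DFunLike.congr_fun e g)

lemma hom_sub {g : MvPolynomial (Fin 3) ℂ} {n : ℕ} (hg : g.IsHomogeneous n) (p : Fin 3 → ℂ)
    (T : MvPolynomial (Fin 3) ℂ) :
    aeval (fun j => C (p j) * T) g = C (eval p g) * T ^ n := by
  rw [aeval_def, eval₂_eq', eval_eq', map_sum, Finset.sum_mul]
  apply Finset.sum_congr rfl
  intro m hm
  have hdeg : m 0 + m 1 + m 2 = n := by
    have := hg (mem_support_iff.1 hm)
    rw [Finsupp.weight_apply, Finsupp.sum_fintype _ _ (by simp), Fin.sum_univ_three] at this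
    simpa using this
  rw [Fin.prod_univ_three, Fin.prod_univ_three, ← hdeg]
  simp only [algebraMap_eq, map_mul, map_pow]
  ring

lemma tf_imp_iso {f : MvPolynomial (Fin 3) ℂ} {d : ℕ} (hd : 1 < d) (hf : f.IsHomogeneous d)
    (htf : ∀ (g : MvPolynomial (Fin 3) ℂ) (k : ℕ), 1 ≤ k → Emem f (f ^ k * g) → Emem f g)
    (p : Fin 3 → ℂ) (h0 : eval p (pderiv 0 f) = 0) (h1 : eval p (pderiv 1 f) = 0)
    (h2 : eval p (pderiv 2 f) = 0) : p = 0 := by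
  by_contra hp
  obtain ⟨i, hi⟩ : ∃ i, p i ≠ 0 := by
    by_contra h
    push Not at h
    exact hp (funext h)
  obtain ⟨j, k, hj, hk, hjk, hall⟩ : ∃ j k : Fin 3, j ≠ i ∧ k ≠ i ∧ j ≠ k ∧
      ∀ l, l = i ∨ l = j ∨ l = k := by
    clear hi
    revert i
    decide
  set T : MvPolynomial (Fin 3) ℂ := C (p i)⁻¹ * X i with hT
  have hTi : C (p i) * T = X i := by
    rw [hT, ← mul_assoc, ← C_mul, mul_inv_cancel₀ hi, C_1, one_mul]
  let τ : MvPolynomial (Fin 3) ℂ →ₐ[ℂ] MvPolynomial (Fin 3) ℂ := aeval (fun j => C (p j) * T)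
  have hτ : ∀ l, τ (X l) = C (p l) * T := fun l => aeval_X _ _
  have hτi : τ (X i) = X i := by rw [hτ, hTi]
  have hτC : ∀ c, τ (C c) = C c := fun c => τ.commutes c
  have hτT : τ T = T := by rw [hT, map_mul, hτi, hτC]
  set P : Ideal (MvPolynomial (Fin 3) ℂ) := RingHom.ker τ with hP
  have hPp : P.IsPrime := RingHom.ker_isPrime τ
  have hne : ∀ l, l ≠ i → (X l - C (p l) * T : MvPolynomial (Fin 3) ℂ) ≠ 0 := by
    intro l hl h
    have := congrArg (eval (Pi.single l (1 : ℂ))) h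
    simp [hT, Pi.single_apply, hl.symm] at this
  have hPl : P = Ideal.span {X j - C (p j) * T, X k - C (p k) * T} := by
    apply le_antisymm
    · intro g hg
      have h := sub_mem_of_hom (Ideal.span {X j - C (p j) * T, X k - C (p k) * T}) τ (by
        intro l
        rw [hτ]
        rcases hall l with rfl | rfl | rfl
        · rw [hTi, sub_self]; exact Ideal.zero_mem _
        · exact Ideal.subset_span (by simp)
        · exact Ideal.subset_span (by simp)) g
      have hg' : τ g = 0 := hg
      rwa [hg', sub_zero] at h
    · rw [Ideal.span_le]
      rintro x (rfl | rfl)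
      · change τ _ = 0
        rw [map_sub, map_mul, hτ, hτC, hτT, sub_self]
      · change τ _ = 0
        rw [map_sub, map_mul, hτ, hτC, hτT, sub_self]
  have hmem : ∀ l, eval p (pderiv l f) = 0 → pderiv l f ∈ P := by
    intro l hl
    change τ _ = 0
    have := hom_sub (hf.pderiv (i := l)) p T
    rw [hl, C_0, zero_mul] at this
    exact this
  refine core2 (pderiv 0 f) (pderiv 1 f) (pderiv 2 f) (X j - C (p j) * T) (X k - C (p k) * T) P
    hPl (hne j hj) ?_ (hmem 0 h0) (hmem 1 h1) (hmem 2 h2)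
    (fun J j0 j1 j2 a b c h => syz_mem hd hf htf J j0 j1 j2 a b c h)
  intro a b hab
  let σ : MvPolynomial (Fin 3) ℂ →ₐ[ℂ] MvPolynomial (Fin 3) ℂ :=
    aeval (fun l => if l = j then C (p j) * T else X l)
  have hσ : ∀ l, σ (X l) = if l = j then C (p j) * T else X l := fun l => aeval_X _ _
  have hσC : ∀ c, σ (C c) = C c := fun c => σ.commutes c
  have hσT : σ T = T := by rw [hT, map_mul, hσ, hσC, if_neg hj.symm]
  have eσ : ∀ l, σ (X l - C (p l) * T) = (if l = j then C (p j) * T else X l) - C (p l) * T := by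
    intro l
    rw [map_sub, map_mul σ (C (p l)) T, hσ, hσC, hσT]
  have e := congrArg σ hab
  rw [map_mul σ (X k - C (p k) * T) a, map_mul σ (X j - C (p j) * T) b, eσ, eσ, if_pos rfl,
    if_neg hjk.symm, sub_self, zero_mul] at e
  have ea := (mul_eq_zero.1 e).resolve_left (hne k hk)
  have h := sub_mem_of_hom (Ideal.span {X j - C (p j) * T}) σ (by
    intro l
    rw [hσ]
    split_ifs with hl
    · rw [hl]; exact Ideal.subset_span rfl
    · rw [sub_self]; exact Ideal.zero_mem _) a
  rwa [ea, sub_zero, Ideal.mem_span_singleton] at h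


/-- For `f ∈ ℂ[x,y,z]` homogeneous of degree `d > 1`, the Brieskorn module
`B(f) = ℂ[x,y,z]/E_f` is torsion free over `ℂ[t]` (with `t` acting by multiplication by
`f`) iff `f` has an isolated singularity at the origin. -/
theorem statement18 (f : MvPolynomial (Fin 3) ℂ) (d : ℕ) (hd : 1 < d)
    (hf : f.IsHomogeneous d) :
    (∀ (g : MvPolynomial (Fin 3) ℂ) (k : ℕ), 1 ≤ k → Emem f (f ^ k * g) → Emem f g) ↔
      (∀ p : Fin 3 → ℂ,
        eval p (pderiv 0 f) = 0 → eval p (pderiv 1 f) = 0 → eval p (pderiv 2 f) = 0 →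
          p = 0) := by
  constructor
  · intro htf p h0 h1 h2
    exact tf_imp_iso hd hf htf p h0 h1 h2
  · intro hiso g k _ hg
    exact iso_imp_tf hf hiso g k hg
end
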